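/- arXiv:1907.04663 — 2 statements merged into one kernel-verified Lean document; each statement's English description precedes it below -/
import Mathlib

section
/- Assume dom f ≠ ∅ and P = ℝⁿ × ℝˢ, let p ∈ [1,∞), let (Ω,𝓕,ℙ) be atomless, and let 𝓡 : L^p(Ω,𝓕,ℙ) → ℝ be law-invariant, convex and nondecreasing. Let 𝓜 ⊆ 𝓜^p_s be locally uniformly ‖·‖^p-integrating. Then the mapping Q_𝓡 restricted to ℝⁿ × 𝓜 is real-valued and continuous, where 𝓜 carries the topology of weak convergence of probability measures. -/
open MeasureTheory Matrix Set Topology Filter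
open scoped ENNReal NNReal

noncomputable section

/-- Feasible set of the lower level problem: `{ y | A y ≤ T x + z }`. -/
def LowerFeas {n m s : ℕ} (A : Matrix (Fin s) (Fin m) ℝ) (T : Matrix (Fin s) (Fin n) ℝ)
    (x : Fin n → ℝ) (z : Fin s → ℝ) : Set (Fin m → ℝ) :=
  {y | A.mulVec y ≤ T.mulVec x + z}

/-- Lower level optimal solution set `Ψ(x,z) = Argmin { dᵀy | A y ≤ T x + z }`. -/
def Psi {n m s : ℕ} (d : Fin m → ℝ) (A : Matrix (Fin s) (Fin m) ℝ)
    (T : Matrix (Fin s) (Fin n) ℝ) (x : Fin n → ℝ) (z : Fin s → ℝ) : Set (Fin m → ℝ) :=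
  {y | y ∈ LowerFeas A T x z ∧ ∀ y' ∈ LowerFeas A T x z, d ⬝ᵥ y ≤ d ⬝ᵥ y'}

/-- `f(x,z) = cᵀx + inf { qᵀ y | y ∈ Ψ(x,z) }` with values in `ℝ ∪ {±∞}`
(the infimum over the empty set being `+∞`). -/
def fE {n m s : ℕ} (c : Fin n → ℝ) (q d : Fin m → ℝ) (A : Matrix (Fin s) (Fin m) ℝ)
    (T : Matrix (Fin s) (Fin n) ℝ) (x : Fin n → ℝ) (z : Fin s → ℝ) : EReal :=
  ((c ⬝ᵥ x : ℝ) : EReal) + sInf ((fun y => ((q ⬝ᵥ y : ℝ) : EReal)) '' Psi d A T x z)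

/-- `P = { (x,z) | ∃ y, A y ≤ T x + z }`. -/
def Pfeas {n m s : ℕ} (A : Matrix (Fin s) (Fin m) ℝ) (T : Matrix (Fin s) (Fin n) ℝ) :
    Set ((Fin n → ℝ) × (Fin s → ℝ)) :=
  {p | (LowerFeas A T p.1 p.2).Nonempty}

/-- `dom f = { (x,z) | f(x,z) ∈ ℝ }`. -/
def domf {n m s : ℕ} (c : Fin n → ℝ) (q d : Fin m → ℝ) (A : Matrix (Fin s) (Fin m) ℝ)
    (T : Matrix (Fin s) (Fin n) ℝ) : Set ((Fin n → ℝ) × (Fin s → ℝ)) :=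
  {p | fE c q d A T p.1 p.2 ≠ ⊤ ∧ fE c q d A T p.1 p.2 ≠ ⊥}

/-- Topological support of a Borel measure. -/
def msupport {s : ℕ} (μ : Measure (Fin s → ℝ)) : Set (Fin s → ℝ) :=
  {z | ∀ U : Set (Fin s → ℝ), IsOpen U → z ∈ U → μ U ≠ 0}

/-- `P_Z = { x | (x,z) ∈ P for all z ∈ supp μ_Z }`. -/
def PZSet {n m s : ℕ} (A : Matrix (Fin s) (Fin m) ℝ) (T : Matrix (Fin s) (Fin n) ℝ)
    (μZ : Measure (Fin s → ℝ)) : Set (Fin n → ℝ) :=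
  {x | ∀ z ∈ msupport μZ, (x, z) ∈ Pfeas A T}


/-- A polyhedron: solution set of finitely many linear inequalities. -/
def IsPolyhedron {n : ℕ} (X : Set (Fin n → ℝ)) : Prop :=
  ∃ (k : ℕ) (B : Matrix (Fin k) (Fin n) ℝ) (b : Fin k → ℝ), X = {x | B.mulVec x ≤ b}

/-- An atomless probability space: every set of positive measure has a measurable
subset of strictly smaller positive measure. -/
def AtomlessSpace {Ω : Type*} [MeasurableSpace Ω] (μ : Measure Ω) : Prop :=
  ∀ S : Set Ω, MeasurableSet S → 0 < μ S →
    ∃ B ⊆ S, MeasurableSet B ∧ 0 < μ B ∧ μ B < μ S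

/-- A set of Borel probability measures is locally uniformly `‖·‖^p`-integrating if around
every member there is a weakly open neighbourhood on which the `p`-th moment tails vanish
uniformly (the limit as `a → ∞` of the antitone tail suprema being their infimum). -/
def LocUnifIntegrating {s : ℕ} (pr : ℝ) (M : Set (ProbabilityMeasure (Fin s → ℝ))) : Prop :=
  ∀ μ ∈ M, ∀ ε : ℝ, 0 < ε →
    ∃ N : Set (ProbabilityMeasure (Fin s → ℝ)), IsOpen N ∧ μ ∈ N ∧
      ⨅ a : ℝ, ⨆ ν ∈ M ∩ N,
        ∫⁻ z in {z : Fin s → ℝ | a ≤ ‖z‖}, ENNReal.ofReal (‖z‖ ^ pr)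
          ∂(ν : Measure (Fin s → ℝ)) ≤ ENNReal.ofReal ε

def PolyC {E : Type*} [AddCommGroup E] [Module ℝ E] (S : Set E) : Prop :=
  ∃ F : Set (E →ₗ[ℝ] ℝ), F.Finite ∧ ∀ e, e ∈ S ↔ ∀ l ∈ F, l e ≤ 0

theorem exists_between_fin {L U : Set ℝ} (hL : L.Finite) (hU : U.Finite)
    (h : ∀ l ∈ L, ∀ u ∈ U, l ≤ u) : ∃ t, (∀ l ∈ L, l ≤ t) ∧ ∀ u ∈ U, t ≤ u := by
  rcases L.eq_empty_or_nonempty with rfl | hne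
  · obtain ⟨t, ht⟩ := hU.bddBelow
    exact ⟨t, by simp, fun u hu => ht hu⟩
  · exact ⟨sSup L, fun l hl => le_csSup hL.bddAbove hl, fun u hu => csSup_le hne fun l hl => h l hl u hu⟩

theorem PolyC.fm_step {E : Type*} [AddCommGroup E] [Module ℝ E] {S : Set (E × ℝ)}
    (h : PolyC S) : PolyC {e | ∃ t, (e, t) ∈ S} := by
  obtain ⟨F, hF, hS⟩ := h
  let r : (E × ℝ →ₗ[ℝ] ℝ) → (E →ₗ[ℝ] ℝ) := fun l => l.comp (LinearMap.inl ℝ E ℝ)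
  let α : (E × ℝ →ₗ[ℝ] ℝ) → ℝ := fun l => l (0, 1)
  have hl : ∀ (l : E × ℝ →ₗ[ℝ] ℝ) e t, l (e, t) = r l e + α l * t := by
    intro l e t
    have : ((e, t) : E × ℝ) = (e, 0) + t • ((0, 1) : E × ℝ) := by simp
    rw [this, map_add, map_smul]
    simp [r, α, mul_comm]
  refine ⟨(r '' {l ∈ F | α l = 0}) ∪
    image2 (fun l l' => α l • r l' - α l' • r l) {l ∈ F | 0 < α l} {l ∈ F | α l < 0}, ?_, ?_⟩
  · exact ((hF.subset (sep_subset _ _)).image _).union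
      (Set.Finite.image2 _ (hF.subset (sep_subset _ _)) (hF.subset (sep_subset _ _)))
  · intro e
    constructor
    · rintro ⟨t, ht⟩ l (⟨l, ⟨hl1, hl2⟩, rfl⟩ | ⟨l, ⟨hl1, hl2⟩, l', ⟨hl1', hl2'⟩, rfl⟩)
      · have := (hS _).1 ht l hl1
        rw [hl, hl2] at this
        linarith
      · have h1 := (hS _).1 ht l hl1
        have h2 := (hS _).1 ht l' hl1'
        rw [hl] at h1 h2
        simp only [LinearMap.sub_apply, LinearMap.smul_apply, smul_eq_mul]
        nlinarith
    · intro H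
      obtain ⟨t, ht1, ht2⟩ := exists_between_fin
        (L := (fun l => - r l e / α l) '' {l ∈ F | α l < 0})
        (U := (fun l => - r l e / α l) '' {l ∈ F | 0 < α l})
        ((hF.subset (sep_subset _ _)).image _) ((hF.subset (sep_subset _ _)).image _) (by
          rintro _ ⟨l', ⟨h1', h2'⟩, rfl⟩ _ ⟨l, ⟨h1, h2⟩, rfl⟩
          have := H _ (Or.inr ⟨l, ⟨h1, h2⟩, l', ⟨h1', h2'⟩, rfl⟩)
          simp only [LinearMap.sub_apply, LinearMap.smul_apply, smul_eq_mul] at this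
          show - r l' e / α l' ≤ - r l e / α l
          have e1 : - r l' e / α l' = r l' e / (- α l') := by rw [div_neg, neg_div]
          rw [e1, div_le_div_iff₀ (by linarith) h2]
          nlinarith)
      refine ⟨t, (hS _).2 fun l hlF => ?_⟩
      rw [hl]
      rcases lt_trichotomy (α l) 0 with h0 | h0 | h0
      · have := ht1 _ ⟨l, ⟨hlF, h0⟩, rfl⟩
        simp only at this
        rw [div_le_iff_of_neg h0] at this
        linarith
      · have := H _ (Or.inl ⟨l, ⟨hlF, h0⟩, rfl⟩)
        rw [h0]; linarith
      · have := ht2 _ ⟨l, ⟨hlF, h0⟩, rfl⟩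
        simp only at this
        rw [le_div_iff₀ h0] at this
        linarith

theorem PolyC.comap {E E' : Type*} [AddCommGroup E] [Module ℝ E] [AddCommGroup E'] [Module ℝ E']
    {S : Set E} (h : PolyC S) (f : E' →ₗ[ℝ] E) : PolyC (f ⁻¹' S) := by
  obtain ⟨F, hF, hS⟩ := h
  refine ⟨(fun l => l.comp f) '' F, hF.image _, fun e => ?_⟩
  simp [hS]

theorem PolyC.inter {E : Type*} [AddCommGroup E] [Module ℝ E]
    {S S' : Set E} (h : PolyC S) (h' : PolyC S') : PolyC (S ∩ S') := by
  obtain ⟨F, hF, hS⟩ := h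
  obtain ⟨F', hF', hS'⟩ := h'
  refine ⟨F ∪ F', hF.union hF', fun e => ?_⟩
  simp only [mem_inter_iff, hS, hS', mem_union]
  exact ⟨fun H l hl => hl.elim (H.1 l) (H.2 l), fun H => ⟨fun l hl => H l (Or.inl hl),
    fun l hl => H l (Or.inr hl)⟩⟩

theorem PolyC.of_family {E ι : Type*} [AddCommGroup E] [Module ℝ E] [Finite ι]
    (l : ι → E →ₗ[ℝ] ℝ) : PolyC {e | ∀ i, l i e ≤ 0} :=
  ⟨range l, finite_range l, fun e => by simp⟩

theorem PolyC.fm {E : Type*} [AddCommGroup E] [Module ℝ E] (m : ℕ) :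
    ∀ {S : Set (E × (Fin m → ℝ))}, PolyC S → PolyC {e | ∃ y, (e, y) ∈ S} := by
  induction m with
  | zero =>
    intro S h
    have := h.comap (LinearMap.inl ℝ E (Fin 0 → ℝ))
    convert this using 1
    ext e
    simp only [mem_ofPred_eq, mem_preimage, LinearMap.inl_apply]
    constructor
    · rintro ⟨y, hy⟩
      rwa [Subsingleton.elim y 0] at hy
    · intro hy; exact ⟨0, hy⟩
  | succ m ih =>
    intro S h
    let f : (E × (Fin m → ℝ)) × ℝ →ₗ[ℝ] E × (Fin (m+1) → ℝ) :=
      { toFun := fun p => (p.1.1, Fin.cons p.2 p.1.2)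
        map_add' := by
          intro a b
          refine Prod.ext rfl ?_
          funext i
          refine Fin.cases ?_ (fun i => ?_) i <;> simp
        map_smul' := by
          intro a b
          refine Prod.ext rfl ?_
          funext i
          refine Fin.cases ?_ (fun i => ?_) i <;> simp }
    have := ih (h.comap f).fm_step
    convert this using 1
    ext e
    simp only [mem_ofPred_eq, mem_preimage]
    constructor
    · rintro ⟨y, hy⟩
      refine ⟨Fin.tail y, y 0, ?_⟩
      show (e, Fin.cons (y 0) (Fin.tail y)) ∈ S
      rwa [Fin.cons_self_tail]
    · rintro ⟨y, t, hy⟩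
      exact ⟨_, hy⟩

theorem PolyC.sectionFun {E : Type*} [NormedAddCommGroup E] [NormedSpace ℝ E] [FiniteDimensional ℝ E]
    {S : Set (E × ℝ)} (h : PolyC S) (hup : ∀ e t t', (e, t) ∈ S → t ≤ t' → (e, t') ∈ S)
    (e₀ : E) (t₀ : ℝ) (h₀ : (e₀, t₀) ∈ S) (B : ℝ) (hB : ∀ t, (e₀, t) ∈ S → B ≤ t) :
    ∃ (K : ℝ≥0) (ψ : E → ℝ), LipschitzWith K ψ ∧
      ∀ e, (∃ t, (e, t) ∈ S) → ∀ t, (e, t) ∈ S ↔ ψ e ≤ t := by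
  obtain ⟨F, hF, hS⟩ := h
  let r : (E × ℝ →ₗ[ℝ] ℝ) → (E →ₗ[ℝ] ℝ) := fun l => l.comp (LinearMap.inl ℝ E ℝ)
  let α : (E × ℝ →ₗ[ℝ] ℝ) → ℝ := fun l => l (0, 1)
  have hl : ∀ (l : E × ℝ →ₗ[ℝ] ℝ) e t, l (e, t) = r l e + α l * t := by
    intro l e t
    have : ((e, t) : E × ℝ) = (e, 0) + t • ((0, 1) : E × ℝ) := by simp
    rw [this, map_add, map_smul]
    simp [r, α, mul_comm]
  have hα : ∀ l ∈ F, α l ≤ 0 := by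
    intro l hlF
    by_contra! hpos
    have := (hS _).1 (hup e₀ t₀ (max t₀ ((1 - r l e₀) / α l)) h₀ (le_max_left _ _)) l hlF
    rw [hl] at this
    have h2 : (1 - r l e₀) / α l ≤ max t₀ ((1 - r l e₀) / α l) := le_max_right _ _
    rw [div_le_iff₀ hpos] at h2
    linarith
  have hne : ∃ l ∈ F, α l < 0 := by
    by_contra! H
    have : (e₀, B - 1) ∈ S := by
      rw [hS]
      intro l hlF
      have h1 := (hS _).1 h₀ l hlF
      have h2 : α l = 0 := le_antisymm (hα l hlF) (H l hlF)
      rw [hl, h2] at h1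
      rw [hl, h2]
      linarith
    linarith [hB _ this]
  let G : Set (E →ₗ[ℝ] ℝ) := (fun l => (-(α l)⁻¹) • r l) '' {l ∈ F | α l < 0}
  have hG : G.Finite := (hF.subset (sep_subset _ _)).image _
  have hGne : G.Nonempty := by
    obtain ⟨l, h1, h2⟩ := hne
    exact ⟨_, l, ⟨h1, h2⟩, rfl⟩
  choose ψ hψ1 hψ2 using fun e => hG.exists_maximalFor (fun l : E →ₗ[ℝ] ℝ => l e) G hGne
  have hψ3 : ∀ e, ∀ l ∈ G, l e ≤ ψ e e := by
    intro e l hlG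
    rcases le_total (l e) (ψ e e) with h | h
    · exact h
    · exact hψ2 e hlG h
  obtain ⟨K, hK⟩ := (hG.image (fun l : E →ₗ[ℝ] ℝ => ‖LinearMap.toContinuousLinearMap l‖)).bddAbove
  have hK' : ∀ l ∈ G, ∀ e, l e ≤ K * ‖e‖ := by
    intro l hlG e
    have h1 := (LinearMap.toContinuousLinearMap l).le_opNorm e
    have h2 : ‖LinearMap.toContinuousLinearMap l‖ ≤ K := hK ⟨l, hlG, rfl⟩
    have h3 : l e ≤ ‖LinearMap.toContinuousLinearMap l e‖ := by
      simpa using le_abs_self (l e)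
    exact h3.trans (h1.trans (by gcongr))
  refine ⟨K.toNNReal, fun e => ψ e e, LipschitzWith.of_le_add_mul _ fun e e' => ?_, ?_⟩
  · have h1 := hK' _ (hψ1 e) (e - e')
    rw [map_sub] at h1
    have h2 := hψ3 e' _ (hψ1 e)
    have h3 : K * ‖e - e'‖ ≤ K.toNNReal * dist e e' := by
      rw [dist_eq_norm]
      gcongr
      exact Real.le_coe_toNNReal K
    linarith
  · rintro e ⟨t₁, ht₁⟩ t
    have key : ∀ l, α l < 0 → ∀ t, (l (e, t) ≤ 0 ↔ ((-(α l)⁻¹) • r l) e ≤ t) := by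
      intro l h0 t
      rw [hl]
      simp only [LinearMap.smul_apply, smul_eq_mul]
      have : -(α l)⁻¹ * r l e = r l e / (- α l) := by rw [div_neg, div_eq_inv_mul]; ring
      rw [this, div_le_iff₀ (by linarith)]
      constructor <;> intro <;> linarith
    constructor
    · intro ht
      obtain ⟨l, ⟨h1, h2⟩, h3⟩ := hψ1 e
      show (ψ e) e ≤ t
      rw [← h3]
      exact (key l h2 t).1 ((hS _).1 ht l h1)
    · intro ht
      rw [hS]
      intro l hlF
      rcases (hα l hlF).lt_or_eq with h0 | h0
      · exact (key l h0 t).2 ((hψ3 e _ ⟨l, ⟨hlF, h0⟩, rfl⟩).trans ht)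
      · have := (hS _).1 ht₁ l hlF
        rw [hl, h0] at this
        rw [hl, h0]
        linarith

theorem PolyC.proj1 {s m : ℕ} (A : Matrix (Fin s) (Fin m) ℝ) (d : Fin m → ℝ) :
    PolyC {e : (Fin s → ℝ) × ℝ | ∃ y : Fin m → ℝ, A.mulVec y ≤ e.1 ∧ d ⬝ᵥ y ≤ e.2} := by
  let l1 : Fin s → (((Fin s → ℝ) × ℝ) × (Fin m → ℝ)) →ₗ[ℝ] ℝ := fun i =>
    { toFun := fun p => A.mulVec p.2 i - p.1.1 i
      map_add' := by intro a b; simp [mulVec_add]; ring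
      map_smul' := by intro a b; simp [mulVec_smul]; ring }
  let l2 : Unit → (((Fin s → ℝ) × ℝ) × (Fin m → ℝ)) →ₗ[ℝ] ℝ := fun _ =>
    { toFun := fun p => d ⬝ᵥ p.2 - p.1.2
      map_add' := by intro a b; simp [dotProduct_add]; ring
      map_smul' := by intro a b; simp [dotProduct_smul]; ring }
  have := ((PolyC.of_family l1).inter (PolyC.of_family l2)).fm m
  convert this using 1
  ext e
  simp [l1, l2, Pi.le_def]

theorem PolyC.proj2 {s m : ℕ} (A : Matrix (Fin s) (Fin m) ℝ) (d q : Fin m → ℝ) :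
    PolyC {e : ((Fin s → ℝ) × ℝ) × ℝ | ∃ y : Fin m → ℝ, A.mulVec y ≤ e.1.1 ∧ d ⬝ᵥ y ≤ e.1.2
      ∧ q ⬝ᵥ y ≤ e.2} := by
  let l1 : Fin s → ((((Fin s → ℝ) × ℝ) × ℝ) × (Fin m → ℝ)) →ₗ[ℝ] ℝ := fun i =>
    { toFun := fun p => A.mulVec p.2 i - p.1.1.1 i
      map_add' := by intro a b; simp [mulVec_add]; ring
      map_smul' := by intro a b; simp [mulVec_smul]; ring }
  let l2 : Unit → ((((Fin s → ℝ) × ℝ) × ℝ) × (Fin m → ℝ)) →ₗ[ℝ] ℝ := fun _ =>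
    { toFun := fun p => d ⬝ᵥ p.2 - p.1.1.2
      map_add' := by intro a b; simp [dotProduct_add]; ring
      map_smul' := by intro a b; simp [dotProduct_smul]; ring }
  let l3 : Unit → ((((Fin s → ℝ) × ℝ) × ℝ) × (Fin m → ℝ)) →ₗ[ℝ] ℝ := fun _ =>
    { toFun := fun p => q ⬝ᵥ p.2 - p.1.2
      map_add' := by intro a b; simp [dotProduct_add]; ring
      map_smul' := by intro a b; simp [dotProduct_smul]; ring }
  have := ((PolyC.of_family l1).inter ((PolyC.of_family l2).inter (PolyC.of_family l3))).fm m
  convert this using 1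
  ext e
  simp [l1, l2, l3, Pi.le_def]

theorem fE_formula {n m s : ℕ}
    (c : Fin n → ℝ) (q d : Fin m → ℝ)
    (A : Matrix (Fin s) (Fin m) ℝ) (T : Matrix (Fin s) (Fin n) ℝ)
    (hdom : (domf c q d A T).Nonempty) (hP : Pfeas A T = Set.univ) :
    ∃ (K : ℝ≥0) (g : (Fin s → ℝ) → ℝ), LipschitzWith K g ∧
      ∀ x z, fE c q d A T x z = ((c ⬝ᵥ x + g (T.mulVec x + z) : ℝ) : EReal) := by
  have hfeas : ∀ b : Fin s → ℝ, ∃ y, A.mulVec y ≤ b := by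
    intro b
    have : ((0 : Fin n → ℝ), b) ∈ Pfeas A T := by rw [hP]; trivial
    obtain ⟨y, hy⟩ := this
    refine ⟨y, ?_⟩
    have hy' : A.mulVec y ≤ T.mulVec 0 + b := hy
    simpa using hy'
  obtain ⟨⟨x₀, z₀⟩, h1, h2⟩ := hdom
  simp only at h1 h2
  set b₀ := T.mulVec x₀ + z₀ with hb₀
  have hne : (Psi d A T x₀ z₀).Nonempty := by
    by_contra! H
    apply h1
    simp [fE, H]
  obtain ⟨y₀, hy₀, hmin₀⟩ := hne
  have hy₀' : A.mulVec y₀ ≤ b₀ := hy₀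
  have hBq : ∃ B : ℝ, ∀ y ∈ Psi d A T x₀ z₀, B ≤ q ⬝ᵥ y := by
    set v := sInf ((fun y => ((q ⬝ᵥ y : ℝ) : EReal)) '' Psi d A T x₀ z₀) with hv
    have hvle : ∀ y ∈ Psi d A T x₀ z₀, v ≤ ((q ⬝ᵥ y : ℝ) : EReal) :=
      fun y hy => sInf_le ⟨y, hy, rfl⟩
    have hvtop : v ≠ ⊤ := fun h => by
      have := hvle y₀ ⟨hy₀, hmin₀⟩
      rw [h] at this
      simp at this
    have hvbot : v ≠ ⊥ := fun h => by
      apply h2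
      simp only [fE]
      rw [← hv, h]
      simp
    refine ⟨v.toReal, fun y hy => ?_⟩
    rw [← EReal.coe_le_coe_iff, EReal.coe_toReal hvtop hvbot]
    exact hvle y hy
  obtain ⟨B, hB⟩ := hBq
  obtain ⟨K1, φ, hφL, hφ⟩ := (PolyC.proj1 A d).sectionFun
    (by rintro e t t' ⟨y, hy1, hy2⟩ ht; exact ⟨y, hy1, hy2.trans ht⟩)
    b₀ (d ⬝ᵥ y₀) ⟨y₀, hy₀', le_rfl⟩ (d ⬝ᵥ y₀)
    (by rintro t ⟨y, hy1, hy2⟩; exact (hmin₀ y hy1).trans hy2)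
  have hφ' : ∀ b t, (∃ y, A.mulVec y ≤ b ∧ d ⬝ᵥ y ≤ t) ↔ φ b ≤ t := by
    intro b t
    obtain ⟨y, hy⟩ := hfeas b
    exact hφ b ⟨d ⬝ᵥ y, y, hy, le_rfl⟩ t
  have hPsi : ∀ x z y, y ∈ Psi d A T x z ↔
      A.mulVec y ≤ T.mulVec x + z ∧ d ⬝ᵥ y ≤ φ (T.mulVec x + z) := by
    intro x z y
    constructor
    · rintro ⟨h1, h2⟩
      refine ⟨h1, ?_⟩
      obtain ⟨y', hy1, hy2⟩ := (hφ' (T.mulVec x + z) _).2 le_rfl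
      exact (h2 y' hy1).trans hy2
    · rintro ⟨h1, h2⟩
      exact ⟨h1, fun y' hy' => h2.trans ((hφ' _ _).1 ⟨y', hy', le_rfl⟩)⟩
  obtain ⟨K2, ψ, hψL, hψ⟩ := (PolyC.proj2 A d q).sectionFun
    (by rintro e t t' ⟨y, hy1, hy2, hy3⟩ ht; exact ⟨y, hy1, hy2, hy3.trans ht⟩)
    (b₀, φ b₀) (q ⬝ᵥ y₀) ⟨y₀, ((hPsi x₀ z₀ y₀).1 ⟨hy₀, hmin₀⟩).1,
      ((hPsi x₀ z₀ y₀).1 ⟨hy₀, hmin₀⟩).2, le_rfl⟩ B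
    (by rintro t ⟨y, hy1, hy2, hy3⟩; exact (hB y ((hPsi x₀ z₀ y).2 ⟨hy1, hy2⟩)).trans hy3)
  refine ⟨K2 * max 1 K1, fun b => ψ (b, φ b),
    hψL.comp (LipschitzWith.id.prodMk hφL), fun x z => ?_⟩
  set b := T.mulVec x + z with hb
  have hψ' : ∀ u, (∃ y, A.mulVec y ≤ b ∧ d ⬝ᵥ y ≤ φ b ∧ q ⬝ᵥ y ≤ u) ↔ ψ (b, φ b) ≤ u := by
    intro u
    obtain ⟨y, hy1, hy2⟩ := (hφ' b _).2 le_rfl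
    exact hψ (b, φ b) ⟨q ⬝ᵥ y, y, hy1, hy2, le_rfl⟩ u
  have : sInf ((fun y => ((q ⬝ᵥ y : ℝ) : EReal)) '' Psi d A T x z) = ((ψ (b, φ b) : ℝ) : EReal) := by
    apply le_antisymm
    · obtain ⟨y, hy1, hy2, hy3⟩ := (hψ' _).2 le_rfl
      have hmem : ((q ⬝ᵥ y : ℝ) : EReal) ∈ (fun y => ((q ⬝ᵥ y : ℝ) : EReal)) '' Psi d A T x z :=
        ⟨y, (hPsi x z y).2 ⟨hy1, hy2⟩, rfl⟩
      exact (sInf_le hmem).trans (EReal.coe_le_coe_iff.2 hy3)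
    · refine le_sInf ?_
      rintro _ ⟨y, hy, rfl⟩
      have := (hPsi x z y).1 hy
      exact EReal.coe_le_coe_iff.2 ((hψ' _).1 ⟨y, this.1, this.2, le_rfl⟩)
  rw [fE, this, EReal.coe_add]

theorem risk_continuous {Ω : Type*} [MeasureSpace Ω]
    (p : ℝ≥0∞) [hp1 : Fact (1 ≤ p)]
    (R : Lp ℝ p (volume : Measure Ω) → ℝ)
    (hconv : ConvexOn ℝ Set.univ R)
    (hmono : ∀ Y₁ Y₂ : Lp ℝ p (volume : Measure Ω),
      (Y₁ : Ω → ℝ) ≤ᵐ[volume] (Y₂ : Ω → ℝ) → R Y₁ ≤ R Y₂) : Continuous R := by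
  have hmono' : Monotone R := fun a b hab => hmono a b ((Lp.coeFn_le a b).2 hab)
  have hbdd : ∃ k : ℕ, ∀ Y : Lp ℝ p (volume : Measure Ω), ‖Y‖ < (1/2 : ℝ)^k → R Y ≤ k := by
    by_contra! H
    choose Y hY1 hY2 using H
    have hs : Summable fun k => |Y k| := by
      refine Summable.of_norm_bounded (g := fun k => (1/2 : ℝ)^k) summable_geometric_two ?_
      intro k
      rw [norm_abs_eq_norm]
      exact (hY1 k).le
    have hle : ∀ k, Y k ≤ ∑' j, |Y j| := fun k =>
      (le_abs_self _).trans (hs.le_tsum k (fun j _ => abs_nonneg _))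
    obtain ⟨k, hk⟩ := exists_nat_gt (R (∑' j, |Y j|))
    linarith [hY2 k, hmono' (hle k)]
  obtain ⟨k, hk⟩ := hbdd
  have h4 : ∃ x₀ ∈ (univ : Set (Lp ℝ p (volume : Measure Ω))),
      (𝓝 x₀).IsBoundedUnder (· ≤ ·) R := by
    refine ⟨0, mem_univ _, k, ?_⟩
    simp only [eventually_map]
    filter_upwards [Metric.ball_mem_nhds (0 : Lp ℝ p (volume : Measure Ω))
      (show (0:ℝ) < (1/2)^k by positivity)] with Y hY
    exact hk Y (by simpa using hY)
  have := ((hconv.continuousOn_tfae isOpen_univ univ_nonempty).out 3 1).1 h4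
  exact continuousOn_univ.1 this

open ProbabilityTheory

/-- quantile function -/
def qf (ν : Measure ℝ) (u : ℝ) : ℝ := sInf {t | u ≤ cdf ν t}

theorem qf_aux_ne (ν : Measure ℝ) [IsProbabilityMeasure ν] {u : ℝ} (hu : u < 1) :
    {t | u ≤ cdf ν t}.Nonempty := by
  obtain ⟨t, ht⟩ := ((tendsto_cdf_atTop ν).eventually (lt_mem_nhds hu)).exists
  exact ⟨t, ht.le⟩

theorem qf_aux_bdd (ν : Measure ℝ) [IsProbabilityMeasure ν] {u : ℝ} (hu : 0 < u) :
    BddBelow {t | u ≤ cdf ν t} := by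
  obtain ⟨t, ht⟩ := ((tendsto_cdf_atBot ν).eventually (gt_mem_nhds hu)).exists
  refine ⟨t, fun t' ht' => ?_⟩
  by_contra! h
  have h1 := monotone_cdf ν h.le
  have h2 : u ≤ cdf ν t' := ht'
  linarith

theorem qf_le_iff (ν : Measure ℝ) [IsProbabilityMeasure ν] {u : ℝ} (h0 : 0 < u) (h1 : u < 1)
    (t : ℝ) : qf ν u ≤ t ↔ u ≤ cdf ν t := by
  constructor
  · intro h
    have hr : Tendsto (cdf ν) (𝓝[>] t) (𝓝 (cdf ν t)) :=
      ((cdf ν).right_continuous t).tendsto.mono_left (nhdsWithin_mono _ Ioi_subset_Ici_self)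
    refine ge_of_tendsto hr ?_
    filter_upwards [self_mem_nhdsWithin] with t' ht'
    obtain ⟨t'', h2, h3⟩ := exists_lt_of_csInf_lt (qf_aux_ne ν h1) (lt_of_le_of_lt h ht')
    exact (show u ≤ cdf ν t'' from h2).trans (monotone_cdf ν h3.le)
  · intro h
    exact csInf_le (qf_aux_bdd ν h0) h

theorem qf_monotoneOn (ν : Measure ℝ) [IsProbabilityMeasure ν] : MonotoneOn (qf ν) (Ioo 0 1) := by
  intro u hu v hv huv
  rw [qf_le_iff ν hu.1 hu.2]
  exact huv.trans ((qf_le_iff ν hv.1 hv.2 _).1 le_rfl)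

theorem qf_aemeasurable (ν : Measure ℝ) [IsProbabilityMeasure ν] :
    AEMeasurable (qf ν) (volume.restrict (Ioo (0:ℝ) 1)) :=
  aemeasurable_restrict_of_monotoneOn measurableSet_Ioo (qf_monotoneOn ν)

instance unif_prob : IsProbabilityMeasure (volume.restrict (Ioo (0:ℝ) 1)) := ⟨by simp⟩

theorem qf_map (ν : Measure ℝ) [IsProbabilityMeasure ν] :
    Measure.map (qf ν) (volume.restrict (Ioo (0:ℝ) 1)) = ν := by
  have : IsProbabilityMeasure (Measure.map (qf ν) (volume.restrict (Ioo (0:ℝ) 1))) :=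
    Measure.isProbabilityMeasure_map (qf_aemeasurable ν)
  refine Measure.ext_of_Iic _ _ fun t => ?_
  rw [Measure.map_apply_of_aemeasurable (qf_aemeasurable ν) measurableSet_Iic,
    Measure.restrict_apply' measurableSet_Ioo, ← ofReal_cdf]
  have : qf ν ⁻¹' Iic t ∩ Ioo 0 1 = Ioo 0 1 ∩ Iic (cdf ν t) := by
    ext u
    constructor
    · rintro ⟨h1, h2⟩
      exact ⟨h2, (qf_le_iff ν h2.1 h2.2 t).1 h1⟩
    · rintro ⟨h1, h2⟩
      exact ⟨(qf_le_iff ν h1.1 h1.2 t).2 h2, h1⟩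
  rw [this]
  have h2 : (Ioo 0 1 ∩ Iic (cdf ν t) : Set ℝ) =ᵐ[volume] (Ioc 0 1 ∩ Iic (cdf ν t) : Set ℝ) :=
    Ioo_ae_eq_Ioc.inter (ae_eq_refl _)
  rw [measure_congr h2, Ioc_inter_Iic, min_eq_right (cdf_le_one ν t), Real.volume_Ioc, sub_zero]

theorem cdf_qf_of_noatoms (ν : Measure ℝ) [IsProbabilityMeasure ν] (hν : ∀ t, ν {t} = 0)
    {u : ℝ} (hu : u ∈ Ioo (0:ℝ) 1) : cdf ν (qf ν u) = u := by
  apply le_antisymm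
  · have h1 : Function.leftLim (cdf ν) (qf ν u) ≤ u := by
      refine le_of_tendsto ((monotone_cdf ν).tendsto_leftLim (qf ν u)) ?_
      filter_upwards [self_mem_nhdsWithin] with t ht
      by_contra! h
      exact absurd ((qf_le_iff ν hu.1 hu.2 t).2 h.le) (not_le.2 ht)
    have h2 := hν (qf ν u)
    conv at h2 => lhs; rw [← measure_cdf ν]
    rw [StieltjesFunction.measure_singleton, ENNReal.ofReal_eq_zero, measure_cdf ν] at h2
    linarith
  · exact (qf_le_iff ν hu.1 hu.2 _).1 le_rfl

theorem cdf_map_of_noatoms (ν : Measure ℝ) [IsProbabilityMeasure ν] (hν : ∀ t, ν {t} = 0) :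
    Measure.map (cdf ν) ν = volume.restrict (Ioo (0:ℝ) 1) := by
  conv_lhs => rw [← qf_map ν]
  have hcm : Measurable (cdf (Measure.map (qf ν) (volume.restrict (Ioo (0:ℝ) 1)))) :=
    (monotone_cdf _).measurable
  rw [AEMeasurable.map_map_of_aemeasurable hcm.aemeasurable (qf_aemeasurable ν)]
  have : (cdf (Measure.map (qf ν) (volume.restrict (Ioo (0:ℝ) 1)))) ∘ (qf ν)
      =ᵐ[volume.restrict (Ioo (0:ℝ) 1)] id := by
    filter_upwards [ae_restrict_mem measurableSet_Ioo] with u hu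
    rw [qf_map ν]
    exact cdf_qf_of_noatoms ν hν hu
  rw [Measure.map_congr this, Measure.map_id]

theorem qf_tendsto {ν : ProbabilityMeasure ℝ} {νs : ℕ → ProbabilityMeasure ℝ}
    (h : Tendsto νs atTop (𝓝 ν)) :
    ∀ᵐ u ∂(volume.restrict (Ioo (0:ℝ) 1)),
      Tendsto (fun k => qf (νs k : Measure ℝ) u) atTop (𝓝 (qf (ν : Measure ℝ) u)) := by
  have hcdf : ∀ t, ContinuousAt (cdf (ν : Measure ℝ)) t →
      Tendsto (fun k => cdf (νs k : Measure ℝ) t) atTop (𝓝 (cdf (ν : Measure ℝ) t)) := by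
    intro t ht
    simp only [cdf_eq_real]
    have h0 : (ν : Measure ℝ) (frontier (Iic t)) = 0 := by
      rw [frontier_Iic, ← measure_cdf (ν : Measure ℝ), StieltjesFunction.measure_singleton,
        (monotone_cdf _).continuousWithinAt_Iio_iff_leftLim_eq.1 ht.continuousWithinAt]
      simp
    have := ProbabilityMeasure.tendsto_measure_of_null_frontier_of_tendsto' h h0
    exact (ENNReal.tendsto_toReal (measure_ne_top _ _)).comp this
  have hcnt : {t | ¬ ContinuousAt (cdf (ν : Measure ℝ)) t}.Countable :=
    (monotone_cdf _).countable_not_continuousAt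
  have hdense : ∀ a b : ℝ, a < b → ∃ t ∈ Ioo a b, ContinuousAt (cdf (ν : Measure ℝ)) t := by
    intro a b hab
    have := hcnt.dense_compl ℝ
    obtain ⟨t, h1, h2⟩ := this.exists_between hab
    exact ⟨t, h2, by simpa using h1⟩
  have hcnt2 := (qf_monotoneOn (ν : Measure ℝ)).countable_not_continuousWithinAt
  have hae : ∀ᵐ u ∂(volume.restrict (Ioo (0:ℝ) 1)),
      u ∉ {u | u ∈ Ioo (0:ℝ) 1 ∧ ¬ ContinuousWithinAt (qf (ν : Measure ℝ)) (Ioo 0 1) u} :=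
    ae_restrict_of_ae (measure_eq_zero_iff_ae_notMem.1 (hcnt2.measure_zero volume))
  filter_upwards [hae, ae_restrict_mem measurableSet_Ioo] with u hu1 hu
  have hc : ContinuousAt (qf (ν : Measure ℝ)) u := by
    by_contra hcc
    exact hu1 ⟨hu, fun h => hcc (h.continuousAt (isOpen_Ioo.mem_nhds hu))⟩
  refine tendsto_order.2 ⟨fun a ha => ?_, fun a ha => ?_⟩
  · obtain ⟨t, ht, htc⟩ := hdense a _ ha
    have h1 : cdf (ν : Measure ℝ) t < u := by
      by_contra! h
      exact absurd ((qf_le_iff (ν : Measure ℝ) hu.1 hu.2 t).2 h) (not_le.2 ht.2)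
    filter_upwards [(hcdf t htc).eventually (gt_mem_nhds h1)] with k hk
    refine ht.1.trans ?_
    by_contra! h
    exact absurd ((qf_le_iff (νs k : Measure ℝ) hu.1 hu.2 t).1 h) (not_le.2 hk)
  · have h1 : ∀ᶠ u' in 𝓝[>] u, qf (ν : Measure ℝ) u' < a ∧ u' ∈ Ioo (0:ℝ) 1 ∧ u < u' := by
      have := (hc.eventually (gt_mem_nhds ha)).and (isOpen_Ioo.mem_nhds hu)
      filter_upwards [nhdsWithin_le_nhds this, self_mem_nhdsWithin] with u' h1 h2
      exact ⟨h1.1, h1.2, h2⟩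
    obtain ⟨u', h1, h2, h3⟩ := h1.exists
    obtain ⟨t, ht, htc⟩ := hdense _ a h1
    have h4 : u < cdf (ν : Measure ℝ) t :=
      h3.trans_le ((qf_le_iff (ν : Measure ℝ) h2.1 h2.2 t).1 ht.1.le)
    filter_upwards [(hcdf t htc).eventually (lt_mem_nhds h4)] with k hk
    exact ((qf_le_iff (νs k : Measure ℝ) hu.1 hu.2 t).2 hk.le).trans_lt ht.2

theorem exists_greedy {Ω : Type*} [MeasurableSpace Ω] (μ : Measure Ω) [IsProbabilityMeasure μ]
    (S : Set Ω) : ∃ B : Set Ω, MeasurableSet B ∧ ∀ B' : Set Ω, MeasurableSet B' →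
      min (μ (S ∩ B')) (μ (S \ B')) / 2 ≤ min (μ (S ∩ B)) (μ (S \ B)) := by
  set v : ℝ≥0∞ := ⨆ B : {B : Set Ω // MeasurableSet B}, min (μ (S ∩ B)) (μ (S \ B)) with hv
  have hle : ∀ B' : Set Ω, MeasurableSet B' → min (μ (S ∩ B')) (μ (S \ B')) ≤ v := fun B' hB' =>
    le_iSup (fun B : {B : Set Ω // MeasurableSet B} => min (μ (S ∩ B)) (μ (S \ B))) ⟨B', hB'⟩
  have hv1 : v ≤ 1 := iSup_le fun B => (min_le_left _ _).trans prob_le_one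
  rcases eq_or_ne v 0 with h0 | h0
  · refine ⟨∅, MeasurableSet.empty, fun B' hB' => ?_⟩
    have := hle B' hB'
    rw [h0] at this
    rw [le_antisymm this bot_le]
    simp
  · have hlt : v / 2 < v := ENNReal.half_lt_self h0 (hv1.trans_lt ENNReal.one_lt_top).ne
    obtain ⟨B, hB⟩ := lt_iSup_iff.1 hlt
    refine ⟨B, B.2, fun B' hB' => le_trans ?_ hB.le⟩
    gcongr
    exact hle B' hB'

theorem exists_noatom {Ω : Type*} [MeasurableSpace Ω] (μ : Measure Ω) [IsProbabilityMeasure μ]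
    (hat : AtomlessSpace μ) : ∃ X : Ω → ℝ, Measurable X ∧ ∀ t, μ (X ⁻¹' {t}) = 0 := by
  classical
  choose B hBm hB using exists_greedy μ
  let C : List Bool → Set Ω := fun l => l.rec univ (fun b _ S => if b then S ∩ B S else S \ B S)
  have hC0 : C [] = univ := rfl
  have hC1 : ∀ b l, C (b :: l) = if b then C l ∩ B (C l) else C l \ B (C l) := fun b l => rfl
  have hCm : ∀ l, MeasurableSet (C l) := by
    intro l
    induction l with
    | nil => exact MeasurableSet.univ
    | cons b l ih =>
      rw [hC1]
      split_ifs
      · exact ih.inter (hBm _)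
      · exact ih.diff (hBm _)
  let Φ : Ω → (List Bool → Bool) := fun ω l => decide (ω ∈ B (C l))
  have hΦ : Measurable Φ := by
    refine measurable_pi_lambda _ fun l => ?_
    refine measurable_to_bool ?_
    have : (fun ω => Φ ω l) ⁻¹' {true} = B (C l) := by ext ω; simp [Φ]
    rw [this]
    exact hBm _
  have hfib : ∀ φ : List Bool → Bool, μ (Φ ⁻¹' {φ}) = 0 := by
    intro φ
    let w : ℕ → List Bool := fun k => k.rec [] (fun _ l => φ l :: l)
    have hw0 : w 0 = [] := rfl
    have hw1 : ∀ k, w (k+1) = φ (w k) :: w k := fun k => rfl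
    set D := ⋂ k, C (w k) with hD
    have hDm : MeasurableSet D := MeasurableSet.iInter fun k => hCm _
    have hsub : Φ ⁻¹' {φ} ⊆ D := by
      intro ω hω
      have hω' : Φ ω = φ := hω
      refine mem_iInter.2 fun k => ?_
      induction k with
      | zero => simp [hw0, hC0]
      | succ k ih =>
        rw [hw1, hC1, ← hω']
        by_cases h : ω ∈ B (C (w k))
        · simp [Φ, h, ih]
        · simp [Φ, h, ih]
    by_contra hne
    have hDpos : 0 < μ D := (pos_iff_ne_zero.2 hne).trans_le (measure_mono hsub)
    obtain ⟨B₀, hB₀D, hB₀m, h1, h2⟩ := hat D hDm hDpos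
    have h3 : 0 < μ (D \ B₀) := by
      rw [measure_sdiff hB₀D hB₀m.nullMeasurableSet (measure_ne_top _ _)]
      exact tsub_pos_of_lt h2
    set δ := min (μ B₀) (μ (D \ B₀)) / 2 with hδ
    have hδ0 : δ ≠ 0 := by
      have : 0 < min (μ B₀) (μ (D \ B₀)) := lt_min h1 h3
      exact (ENNReal.half_pos this.ne').ne'
    have hstep : ∀ k, μ (C (w (k+1))) + δ ≤ μ (C (w k)) := by
      intro k
      have hDk : D ⊆ C (w k) := iInter_subset _ k
      have hg : δ ≤ min (μ (C (w k) ∩ B (C (w k)))) (μ (C (w k) \ B (C (w k)))) := by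
        refine le_trans ?_ (hB (C (w k)) B₀ hB₀m)
        rw [hδ]
        gcongr
        exact subset_inter (hB₀D.trans hDk) subset_rfl
      have hsum := measure_inter_add_sdiff (μ := μ) (C (w k)) (hBm (C (w k)))
      rw [hw1, hC1, ← hsum]
      split_ifs
      · gcongr
        exact hg.trans (min_le_right _ _)
      · rw [add_comm]
        gcongr
        exact hg.trans (min_le_left _ _)
    have hall : ∀ k : ℕ, (k : ℝ≥0∞) * δ ≤ 1 := by
      have : ∀ k : ℕ, μ (C (w k)) + k * δ ≤ 1 := by
        intro k
        induction k with
        | zero => simp [prob_le_one]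
        | succ k ih =>
          refine le_trans ?_ ih
          have := hstep k
          calc μ (C (w (k+1))) + ((k+1 : ℕ) : ℝ≥0∞) * δ
              = (μ (C (w (k+1))) + δ) + k * δ := by push_cast; ring
            _ ≤ _ := by gcongr
      exact fun k => le_trans le_add_self (this k)
    obtain ⟨k, hk⟩ := ENNReal.exists_nat_mul_gt hδ0 ENNReal.one_ne_top
    exact absurd (hall k) (not_le.2 hk)
  refine ⟨fun ω => embeddingReal (List Bool → Bool) (Φ ω),
    (measurableEmbedding_embeddingReal _).measurable.comp hΦ, fun t => ?_⟩
  by_cases h : ∃ φ, embeddingReal (List Bool → Bool) φ = t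
  · obtain ⟨φ, rfl⟩ := h
    refine measure_mono_null ?_ (hfib φ)
    intro ω hω
    exact (measurableEmbedding_embeddingReal _).injective hω
  · have : (fun ω => embeddingReal (List Bool → Bool) (Φ ω)) ⁻¹' {t} = ∅ := by
      ext ω
      simp only [mem_preimage, mem_singleton_iff, mem_empty_iff_false, iff_false]
      exact fun hh => h ⟨_, hh⟩
    rw [this]
    simp

theorem exists_unif {Ω : Type*} [MeasurableSpace Ω] (μ : Measure Ω) [IsProbabilityMeasure μ]
    (hat : AtomlessSpace μ) : ∃ V : Ω → ℝ, Measurable V ∧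
      Measure.map V μ = volume.restrict (Ioo (0:ℝ) 1) := by
  obtain ⟨X, hX, hX0⟩ := exists_noatom μ hat
  have : IsProbabilityMeasure (Measure.map X μ) := Measure.isProbabilityMeasure_map hX.aemeasurable
  have hm : Measurable (cdf (Measure.map X μ)) := (monotone_cdf _).measurable
  refine ⟨fun ω => cdf (Measure.map X μ) (X ω), hm.comp hX, ?_⟩
  have h1 := cdf_map_of_noatoms (Measure.map X μ) (fun t => by
    rw [Measure.map_apply hX (measurableSet_singleton t)]; exact hX0 t)
  rw [Measure.map_map hm hX] at h1
  exact h1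

theorem tail_bound {s : ℕ} (μ : Measure (Fin s → ℝ)) (p : ℝ≥0∞) (hp0 : p ≠ 0) (hptop : p ≠ ⊤)
    (G : (Fin s → ℝ) → ℝ) {D L a C : ℝ} (hL : 0 < L)
    (hG : ∀ z, |G z| ≤ D + L * ‖z‖) (hC : D + L * max a D ≤ C) :
    eLpNorm (fun z => {y : ℝ | C ≤ |y|}.indicator id (G z)) p μ ≤
      ENNReal.ofReal (1 + L) * (∫⁻ z in {z : Fin s → ℝ | a ≤ ‖z‖},
        ENNReal.ofReal (‖z‖ ^ p.toReal) ∂μ) ^ (1 / p.toReal) := by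
  have hms : MeasurableSet {z : Fin s → ℝ | a ≤ ‖z‖} := measurableSet_le measurable_const
    measurable_norm
  have h1 : eLpNorm (fun z => {y : ℝ | C ≤ |y|}.indicator id (G z)) p μ ≤
      eLpNorm ((1 + L) • {z : Fin s → ℝ | a ≤ ‖z‖}.indicator (fun z => ‖z‖)) p μ := by
    refine eLpNorm_mono fun z => ?_
    by_cases hz : C ≤ |G z|
    · have h2 : L * max a D ≤ L * ‖z‖ := by linarith [hG z]
      have h3 : max a D ≤ ‖z‖ := le_of_mul_le_mul_left h2 hL
      have h4 : a ≤ ‖z‖ := (le_max_left _ _).trans h3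
      have h5 : D ≤ ‖z‖ := (le_max_right _ _).trans h3
      rw [indicator_of_mem (show G z ∈ {y : ℝ | C ≤ |y|} from hz)]
      rw [Pi.smul_apply, indicator_of_mem (show z ∈ {z : Fin s → ℝ | a ≤ ‖z‖} from h4)]
      simp only [id, smul_eq_mul, Real.norm_eq_abs]
      rw [abs_of_nonneg (show 0 ≤ (1 + L) * ‖z‖ by positivity)]
      linarith [hG z]
    · rw [indicator_of_notMem (show G z ∉ {y : ℝ | C ≤ |y|} from hz)]
      simp only [norm_zero]
      exact norm_nonneg _
  refine h1.trans ?_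
  rw [eLpNorm_const_smul, Real.enorm_of_nonneg (by positivity)]
  gcongr
  rw [eLpNorm_eq_lintegral_rpow_enorm_toReal hp0 hptop, ← lintegral_indicator hms]
  gcongr with z
  by_cases hz : a ≤ ‖z‖
  · rw [indicator_of_mem (show z ∈ {z : Fin s → ℝ | a ≤ ‖z‖} from hz),
      indicator_of_mem (show z ∈ {z : Fin s → ℝ | a ≤ ‖z‖} from hz)]
    rw [enorm_norm, ← ofReal_norm, ENNReal.ofReal_rpow_of_nonneg (norm_nonneg _)
      ENNReal.toReal_nonneg]
  · rw [indicator_of_notMem (show z ∉ {z : Fin s → ℝ | a ≤ ‖z‖} from hz),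
      indicator_of_notMem (show z ∉ {z : Fin s → ℝ | a ≤ ‖z‖} from hz)]
    simp [ENNReal.toReal_pos hp0 hptop]

theorem memLp_of_growth {s : ℕ} (μ : Measure (Fin s → ℝ)) [IsProbabilityMeasure μ]
    (p : ℝ≥0∞) (hp0 : p ≠ 0) (hptop : p ≠ ⊤)
    (G : (Fin s → ℝ) → ℝ) (hGm : Measurable G) {D L : ℝ}
    (hG : ∀ z, |G z| ≤ D + L * ‖z‖)
    (hmom : ∫⁻ z, ENNReal.ofReal (‖z‖ ^ p.toReal) ∂μ < ⊤) : MemLp G p μ := by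
  have hn : MemLp (fun z : Fin s → ℝ => ‖z‖) p μ := by
    refine ⟨measurable_norm.aestronglyMeasurable, ?_⟩
    rw [eLpNorm_lt_top_iff_lintegral_rpow_enorm_lt_top hp0 hptop]
    convert hmom using 3 with z
    rw [enorm_norm, ← ofReal_norm, ENNReal.ofReal_rpow_of_nonneg (norm_nonneg _)
      ENNReal.toReal_nonneg]
  have h2 : MemLp (fun z : Fin s → ℝ => D + L * ‖z‖) p μ := (memLp_const D).add (hn.const_mul L)
  exact h2.mono' hGm.aestronglyMeasurable (Eventually.of_forall hG)

theorem lui_tail {s : ℕ} {pr : ℝ} (hpr : 0 < pr) {M : Set (ProbabilityMeasure (Fin s → ℝ))}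
    (h : LocUnifIntegrating pr M) {μ : ProbabilityMeasure (Fin s → ℝ)} (hμ : μ ∈ M)
    {L ε : ℝ} (hL : 0 < L) (hε : 0 < ε) :
    ∃ N : Set (ProbabilityMeasure (Fin s → ℝ)), IsOpen N ∧ μ ∈ N ∧ ∃ a : ℝ, ∀ ν ∈ M, ν ∈ N →
      ENNReal.ofReal (1 + L) * (∫⁻ z in {z : Fin s → ℝ | a ≤ ‖z‖},
        ENNReal.ofReal (‖z‖ ^ pr) ∂(ν : Measure (Fin s → ℝ))) ^ (1 / pr) ≤ ENNReal.ofReal ε := by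
  have hL1 : 0 < 1 + L := by linarith
  set η := (ε / (1 + L)) ^ pr with hη
  have hη0 : 0 < η := by positivity
  obtain ⟨N, hN, hμN, hle⟩ := h μ hμ (η / 2) (by positivity)
  refine ⟨N, hN, hμN, ?_⟩
  have hlt := hle.trans_lt ((ENNReal.ofReal_lt_ofReal_iff hη0).2 (half_lt_self hη0))
  obtain ⟨a, ha⟩ := iInf_lt_iff.1 hlt
  refine ⟨a, fun ν hνM hνN => ?_⟩
  have h1 : ∫⁻ z in {z : Fin s → ℝ | a ≤ ‖z‖},
        ENNReal.ofReal (‖z‖ ^ pr) ∂(ν : Measure (Fin s → ℝ)) ≤ ENNReal.ofReal η :=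
    le_trans (le_iSup₂ (f := fun (ν : ProbabilityMeasure (Fin s → ℝ)) (_ : ν ∈ M ∩ N) =>
      ∫⁻ z in {z : Fin s → ℝ | a ≤ ‖z‖},
        ENNReal.ofReal (‖z‖ ^ pr) ∂(ν : Measure (Fin s → ℝ))) ν ⟨hνM, hνN⟩) ha.le
  calc _ ≤ ENNReal.ofReal (1 + L) * (ENNReal.ofReal η) ^ (1 / pr) := by gcongr
    _ = ENNReal.ofReal ε := by
      rw [ENNReal.ofReal_rpow_of_pos hη0, hη, ← Real.rpow_mul (by positivity),
        mul_one_div_cancel hpr.ne', Real.rpow_one, ← ENNReal.ofReal_mul hL1.le,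
        mul_div_cancel₀ _ hL1.ne']
theorem QR_realValued_and_weakly_continuous {n m s : ℕ}
    (c : Fin n → ℝ) (q d : Fin m → ℝ)
    (A : Matrix (Fin s) (Fin m) ℝ) (T : Matrix (Fin s) (Fin n) ℝ)
    (hdom : (domf c q d A T).Nonempty) (hP : Pfeas A T = Set.univ)
    {Ω : Type*} [MeasureSpace Ω] [IsProbabilityMeasure (volume : Measure Ω)]
    (hatomless : AtomlessSpace (volume : Measure Ω))
    (p : ℝ≥0∞) [hp1 : Fact (1 ≤ p)] (hptop : p ≠ ⊤)
    (R : Lp ℝ p (volume : Measure Ω) → ℝ)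
    (hLI : ∀ Y₁ Y₂ : Lp ℝ p (volume : Measure Ω),
      Measure.map (Y₁ : Ω → ℝ) volume = Measure.map (Y₂ : Ω → ℝ) volume → R Y₁ = R Y₂)
    (hconv : ConvexOn ℝ Set.univ R)
    (hmono : ∀ Y₁ Y₂ : Lp ℝ p (volume : Measure Ω),
      (Y₁ : Ω → ℝ) ≤ᵐ[volume] (Y₂ : Ω → ℝ) → R Y₁ ≤ R Y₂)
    (M : Set (ProbabilityMeasure (Fin s → ℝ)))
    (hMmom : ∀ μ ∈ M,
      ∫⁻ z, ENNReal.ofReal (‖z‖ ^ p.toReal) ∂(μ : Measure (Fin s → ℝ)) < ⊤)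
    (hLUI : LocUnifIntegrating p.toReal M)
    (Q : (Fin n → ℝ) → ProbabilityMeasure (Fin s → ℝ) → ℝ)
    (hQ : ∀ x μ, μ ∈ M → ∀ Y : Lp ℝ p (volume : Measure Ω),
      Measure.map (Y : Ω → ℝ) volume
        = Measure.map (fun z => (fE c q d A T x z).toReal) (μ : Measure (Fin s → ℝ)) →
      Q x μ = R Y) :
    (∀ x, ∀ μ ∈ M, ∃ Y : Lp ℝ p (volume : Measure Ω),
      Measure.map (Y : Ω → ℝ) volume
        = Measure.map (fun z => (fE c q d A T x z).toReal) (μ : Measure (Fin s → ℝ))) ∧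
    ContinuousOn (fun pr : (Fin n → ℝ) × ProbabilityMeasure (Fin s → ℝ) => Q pr.1 pr.2)
      (Set.univ ×ˢ M) := by
  obtain ⟨K, g, hg, hf⟩ := fE_formula c q d A T hdom hP
  obtain ⟨V, hV, hVmap⟩ := exists_unif (volume : Measure Ω) hatomless
  have hRc := risk_continuous p R hconv hmono
  have hp1' : 1 ≤ p := hp1.out
  have hp0 : p ≠ 0 := (zero_lt_one.trans_le hp1').ne'
  have hpr : 0 < p.toReal := ENNReal.toReal_pos hp0 hptop
  let F : (Fin n → ℝ) → (Fin s → ℝ) → ℝ := fun x z => c ⬝ᵥ x + g (T.mulVec x + z)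
  have hFE : ∀ x, (fun z => (fE c q d A T x z).toReal) = F x := by
    intro x; funext z; rw [hf]; rfl
  simp only [hFE] at hQ ⊢
  have hTc : Continuous fun x : Fin n → ℝ => T.mulVec x := continuous_const.matrix_mulVec continuous_id
  have hcc : Continuous fun x : Fin n → ℝ => c ⬝ᵥ x := continuous_const.dotProduct continuous_id
  have hFc : Continuous (fun w : (Fin n → ℝ) × (Fin s → ℝ) => F w.1 w.2) :=
    (hcc.comp continuous_fst).add
      (hg.continuous.comp ((hTc.comp continuous_fst).add continuous_snd))
  have hFxm : ∀ x, Measurable (F x) := fun x =>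
    (hFc.comp (Continuous.prodMk_right x)).measurable
  let L : ℝ := K + 1
  have hL : 0 < L := by positivity
  let Dx : (Fin n → ℝ) → ℝ := fun x => |c ⬝ᵥ x| + |g 0| + K * ‖T.mulVec x‖
  have hDc : Continuous Dx := ((hcc.abs).add continuous_const).add (continuous_const.mul hTc.norm)
  have hgrow : ∀ x z, |F x z| ≤ Dx x + L * ‖z‖ := by
    intro x z
    have h1 := hg.dist_le_mul (T.mulVec x + z) 0
    rw [dist_zero_right, Real.dist_eq] at h1
    have h2 : (K : ℝ) * ‖T.mulVec x + z‖ ≤ K * (‖T.mulVec x‖ + ‖z‖) := by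
      gcongr; exact norm_add_le _ _
    have h3 : |F x z| ≤ |c ⬝ᵥ x| + (|g (T.mulVec x + z) - g 0| + |g 0|) := by
      refine (abs_add_le _ _).trans ?_
      gcongr
      calc |g (T.mulVec x + z)| = |(g (T.mulVec x + z) - g 0) + g 0| := by ring_nf
        _ ≤ _ := abs_add_le _ _
    have h4 : 0 ≤ ‖z‖ := norm_nonneg z
    simp only [Dx, L]
    linarith
  let law : (Fin n → ℝ) → ProbabilityMeasure (Fin s → ℝ) → ProbabilityMeasure ℝ :=
    fun x μ => μ.map (hFxm x).aemeasurable
  have hlaw : ∀ x μ, (law x μ : Measure ℝ) = Measure.map (F x) (μ : Measure (Fin s → ℝ)) :=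
    fun x μ => rfl
  have hlawc : Continuous fun w : (Fin n → ℝ) × ProbabilityMeasure (Fin s → ℝ) => law w.1 w.2 := by
    have h1 : Continuous fun w : (Fin n → ℝ) × ProbabilityMeasure (Fin s → ℝ) =>
        ((diracProba w.1).prod w.2).map hFc.measurable.aemeasurable :=
      (ProbabilityMeasure.continuous_map hFc).comp (ProbabilityMeasure.continuous_prod.comp
        ((continuous_diracProba.comp continuous_fst).prodMk continuous_snd))
    convert h1 using 2 with w
    apply Subtype.ext
    show Measure.map (F w.1) (w.2 : Measure (Fin s → ℝ)) = Measure.map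
      (fun w : (Fin n → ℝ) × (Fin s → ℝ) => F w.1 w.2)
      ((Measure.dirac w.1).prod (w.2 : Measure (Fin s → ℝ)))
    rw [Measure.dirac_prod, Measure.map_map hFc.measurable measurable_prodMk_left]
    rfl
  let Y : (Fin n → ℝ) → ProbabilityMeasure (Fin s → ℝ) → Ω → ℝ :=
    fun x μ ω => qf (law x μ : Measure ℝ) (V ω)
  have hYae : ∀ x μ, AEMeasurable (Y x μ) volume := by
    intro x μ
    have := qf_aemeasurable (law x μ : Measure ℝ)
    rw [← hVmap] at this
    exact this.comp_measurable hV
  have hYmap : ∀ x μ, Measure.map (Y x μ) volume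
      = Measure.map (F x) (μ : Measure (Fin s → ℝ)) := by
    intro x μ
    have h1 := qf_aemeasurable (law x μ : Measure ℝ)
    have h2 := qf_map (law x μ : Measure ℝ)
    rw [← hVmap] at h1 h2
    rw [AEMeasurable.map_map_of_aemeasurable h1 hV.aemeasurable] at h2
    exact h2
  have htrans : ∀ x μ (h : ℝ → ℝ), Measurable h → eLpNorm (fun ω => h (Y x μ ω)) p volume
      = eLpNorm (fun z => h (F x z)) p (μ : Measure (Fin s → ℝ)) := by
    intro x μ h hh
    have h1 := eLpNorm_map_measure (p := p) (μ := (volume : Measure Ω)) (f := Y x μ) (g := h)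
      hh.aestronglyMeasurable (hYae x μ)
    have h2 := eLpNorm_map_measure (p := p) (μ := (μ : Measure (Fin s → ℝ))) (f := F x) (g := h)
      hh.aestronglyMeasurable (hFxm x).aemeasurable
    rw [hYmap] at h1
    exact h1.symm.trans h2
  have hYmem : ∀ x, ∀ μ ∈ M, MemLp (Y x μ) p volume := by
    intro x μ hμ
    refine ⟨(hYae x μ).aestronglyMeasurable, ?_⟩
    have := htrans x μ id measurable_id
    simp only [id] at this
    rw [this]
    exact (memLp_of_growth (μ : Measure (Fin s → ℝ)) p hp0 hptop (F x) (hFxm x) (hgrow x)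
      (hMmom μ hμ)).2
  have hYlaw : ∀ x μ (hμ : μ ∈ M), Measure.map ((hYmem x μ hμ).toLp (Y x μ) : Ω → ℝ) volume
      = Measure.map (F x) (μ : Measure (Fin s → ℝ)) := by
    intro x μ hμ
    rw [Measure.map_congr (hYmem x μ hμ).coeFn_toLp, hYmap]
  have hQR : ∀ x μ (hμ : μ ∈ M), Q x μ = R ((hYmem x μ hμ).toLp (Y x μ)) :=
    fun x μ hμ => hQ x μ hμ _ (hYlaw x μ hμ)
  refine ⟨fun x μ hμ => ⟨_, hYlaw x μ hμ⟩, ?_⟩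
  -- sequential core
  have core : ∀ (x : Fin n → ℝ) (μ : ProbabilityMeasure (Fin s → ℝ)) (hμ : μ ∈ M)
      (xs : ℕ → Fin n → ℝ) (μs : ℕ → ProbabilityMeasure (Fin s → ℝ)) (hμs : ∀ k, μs k ∈ M),
      Tendsto xs atTop (𝓝 x) → Tendsto μs atTop (𝓝 μ) →
      Tendsto (fun k => Q (xs k) (μs k)) atTop (𝓝 (Q x μ)) := by
    intro x μ hμ xs μs hμs hx hm
    simp only [hQR _ _ (hμs _), hQR x μ hμ]
    refine (hRc.tendsto _).comp ?_
    rw [Lp.tendsto_Lp_iff_tendsto_eLpNorm'']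
    refine tendsto_Lp_finite_of_tendsto_ae hp1' hptop
      (fun k => (hYae (xs k) (μs k)).aestronglyMeasurable) (hYmem x μ hμ) ?_ ?_
    · refine unifIntegrable_of hp1' hptop
        (fun k => (hYae (xs k) (μs k)).aestronglyMeasurable) fun ε hε => ?_
      let good : ℕ → ℝ → Prop := fun k C =>
        eLpNorm (fun ω => {y : ℝ | C ≤ |y|}.indicator id (Y (xs k) (μs k) ω)) p volume
          ≤ ENNReal.ofReal ε
      have hmonog : ∀ k C C', C ≤ C' → good k C → good k C' := by
        intro k C C' hCC hk
        refine le_trans (eLpNorm_mono fun ω => ?_) hk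
        refine norm_indicator_le_of_subset ?_ _ _
        intro y (hy : C' ≤ |y|)
        exact hCC.trans hy
      obtain ⟨N, hN, hμN, a, ha⟩ := lui_tail hpr hLUI hμ hL hε
      have hmeas : ∀ C : ℝ, Measurable ({y : ℝ | C ≤ |y|}.indicator (id : ℝ → ℝ)) := fun C =>
        measurable_id.indicator (measurableSet_le measurable_const continuous_abs.measurable)
      have hev : ∃ C₀, ∀ᶠ k in atTop, good k C₀ := by
        refine ⟨(Dx x + 1) + L * max a (Dx x + 1), ?_⟩
        filter_upwards [hm.eventually (hN.mem_nhds hμN),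
          ((hDc.tendsto x).comp hx).eventually (gt_mem_nhds (lt_add_one (Dx x)))] with k hk1 hk2
        show eLpNorm _ p volume ≤ _
        rw [htrans (xs k) (μs k) _ (hmeas _)]
        refine le_trans (tail_bound (μs k : Measure (Fin s → ℝ)) p hp0 hptop (F (xs k)) (a := a) hL
          (fun z => ?_) le_rfl) (ha (μs k) (hμs k) hk1)
        refine (hgrow (xs k) z).trans ?_
        have : Dx (xs k) < Dx x + 1 := hk2
        linarith
      have hind : ∀ k, ∃ C, good k C := by
        intro k
        have hmem : MemLp (id : ℝ → ℝ) p (Measure.map (Y (xs k) (μs k)) volume) :=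
          (memLp_map_measure_iff measurable_id.aestronglyMeasurable (hYae _ _)).2
            (hYmem (xs k) (μs k) (hμs k))
        obtain ⟨C, hC⟩ := hmem.eLpNorm_indicator_norm_ge_le stronglyMeasurable_id hε
        refine ⟨C, ?_⟩
        have h2 := eLpNorm_map_measure (p := p) (μ := (volume : Measure Ω))
          (f := Y (xs k) (μs k)) (g := {y : ℝ | C ≤ |y|}.indicator id)
          (hmeas C).aestronglyMeasurable (hYae _ _)
        exact h2.symm.le.trans hC
      obtain ⟨C₀, hC₀⟩ := hev
      obtain ⟨k₀, hk₀⟩ := eventually_atTop.1 hC₀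
      choose Ck hCk using hind
      obtain ⟨B, hB⟩ := ((Finset.range k₀).finite_toSet.image Ck).bddAbove
      refine ⟨(max C₀ B).toNNReal, fun k => ?_⟩
      have hk : good k (max C₀ B) := by
        by_cases hkk : k₀ ≤ k
        · exact hmonog k _ _ (le_max_left _ _) (hk₀ k hkk)
        · refine hmonog k _ _ (le_max_right _ _) (hmonog k _ _ (hB ⟨k, ?_, rfl⟩) (hCk k))
          simpa using hkk
      refine le_trans (le_of_eq ?_) (hmonog k _ _ (Real.le_coe_toNNReal (max C₀ B)) hk)
      congr 1
    · have := qf_tendsto (((hlawc.tendsto (x, μ)).comp (hx.prodMk_nhds hm)))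
      rw [← hVmap] at this
      exact ae_of_ae_map hV.aemeasurable this
  rintro ⟨x, μ⟩ ⟨-, hμ⟩
  refine tendsto_of_seq_tendsto fun u hu => ?_
  obtain ⟨hu1, hu2⟩ := tendsto_nhdsWithin_iff.1 hu
  obtain ⟨k₁, hk₁⟩ := eventually_atTop.1 hu2
  rw [← tendsto_add_atTop_iff_nat k₁]
  have hu3 := (tendsto_add_atTop_iff_nat k₁).2 hu1
  exact core x μ hμ (fun k => (u (k + k₁)).1) (fun k => (u (k + k₁)).2)
    (fun k => (hk₁ (k + k₁) (Nat.le_add_left _ _)).2)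
    ((continuous_fst.tendsto _).comp hu3) ((continuous_snd.tendsto _).comp hu3)
end
end

section
/- Assume dom f ≠ ∅ and P = ℝⁿ × ℝˢ, let p ∈ [1,∞), let (Ω,𝓕,ℙ) be atomless, let 𝓡 : L^p(Ω,𝓕,ℙ) → ℝ be law-invariant, convex and nondecreasing, let X ⊆ ℝⁿ be a nonempty polyhedron, and let 𝓜 ⊆ 𝓜^p_s be locally uniformly ‖·‖^p-integrating. Then the global optimal value function φ_{ℝⁿ}(μ) := inf { Q_𝓡(x,μ) : x ∈ X }, restricted to 𝓜, is upper semicontinuous with respect to the topology of weak convergence of probability measures. -/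
open MeasureTheory Matrix Set Topology Filter
open scoped ENNReal NNReal

noncomputable section

lemma fm_one {ι : Type} [Fintype ι] (a w : ι → ℝ)
    (h0 : ∀ i, a i = 0 → 0 ≤ w i)
    (h1 : ∀ i j, 0 < a i → a j < 0 → 0 ≤ a i * w j - a j * w i) :
    ∃ y : ℝ, ∀ i, a i * y ≤ w i := by
  classical
  have key : ∃ y : ℝ, (∀ i, 0 < a i → y ≤ w i / a i) ∧ (∀ j, a j < 0 → w j / a j ≤ y) := by
    have hle : ∀ i j, 0 < a i → a j < 0 → w j / a j ≤ w i / a i := by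
      intro i j hi hj
      have := h1 i j hi hj
      rw [div_le_iff_of_neg hj, div_mul_eq_mul_div, div_le_iff₀ hi]
      linarith
    by_cases hn : (Finset.univ.filter (fun j => a j < 0)).Nonempty
    · obtain ⟨j, hj, hmax⟩ := Finset.exists_max_image _ (fun j => w j / a j) hn
      refine ⟨w j / a j, fun i hi => hle i j hi (by simpa using hj), fun k hk => hmax k (by simpa using hk)⟩
    · by_cases hp : (Finset.univ.filter (fun j => 0 < a j)).Nonempty
      · obtain ⟨j, hj, hmin⟩ := Finset.exists_min_image _ (fun j => w j / a j) hp
        refine ⟨w j / a j, fun k hk => hmin k (by simpa using hk), fun i hi => ?_⟩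
        exact hle j i (by simpa using hj) hi
      · refine ⟨0, fun i hi => absurd ⟨i, by simpa using hi⟩ hp, fun i hi => absurd ⟨i, by simpa using hi⟩ hn⟩
  obtain ⟨y, hy1, hy2⟩ := key
  refine ⟨y, fun i => ?_⟩
  rcases lt_trichotomy (a i) 0 with h | h | h
  · have := hy2 i h
    rw [div_le_iff_of_neg h] at this; linarith
  · rw [h]; simpa using h0 i h
  · have := hy1 i h
    rw [le_div_iff₀ h] at this; linarith

lemma fm_elim : ∀ (m : ℕ) (ι : Type) [Fintype ι] (A : ι → Fin m → ℝ),
    ∃ U : Finset (ι → ℝ), ∀ t : ι → ℝ,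
      (∃ y : Fin m → ℝ, ∀ i, A i ⬝ᵥ y ≤ t i) ↔ ∀ u ∈ U, 0 ≤ u ⬝ᵥ t := by
  classical
  intro m
  induction m with
  | zero =>
    intro ι _ A
    refine ⟨Finset.univ.image (fun i => Pi.single i (1 : ℝ)), fun t => ?_⟩
    simp [dotProduct, Pi.single_apply]
  | succ m ih =>
    intro ι _ A
    let a : ι → ℝ := fun i => A i 0
    let L : ι × ι → ι → ℝ := fun ij =>
      if 0 < a ij.1 ∧ a ij.2 < 0 then a ij.1 • Pi.single ij.2 1 - a ij.2 • Pi.single ij.1 1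
      else if a ij.1 = 0 then Pi.single ij.1 1 else 0
    obtain ⟨U, hU⟩ := ih (ι × ι) (fun ij l => L ij ⬝ᵥ (fun i => A i l.succ))
    refine ⟨U.image (fun u i => ∑ ij, u ij * L ij i), fun t => ?_⟩
    have e1 : (∀ u ∈ U.image (fun u i => ∑ ij, u ij * L ij i), 0 ≤ u ⬝ᵥ t) ↔
        ∀ u ∈ U, 0 ≤ u ⬝ᵥ (fun ij => L ij ⬝ᵥ t) := by
      simp only [Finset.forall_mem_image]
      refine forall₂_congr fun u _ => ?_
      have : (fun i => ∑ ij, u ij * L ij i) ⬝ᵥ t = u ⬝ᵥ (fun ij => L ij ⬝ᵥ t) := by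
        simp only [dotProduct, Finset.sum_mul, Finset.mul_sum]
        rw [Finset.sum_comm]
        simp only [mul_assoc]
      rw [this]
    rw [e1, ← hU]
    have e2 : ∀ (y : Fin m → ℝ) (ij : ι × ι),
        (fun l : Fin m => L ij ⬝ᵥ (fun i => A i l.succ)) ⬝ᵥ y
          = L ij ⬝ᵥ (fun i => (fun l : Fin m => A i l.succ) ⬝ᵥ y) := by
      intro y ij
      simp only [dotProduct, Finset.sum_mul, Finset.mul_sum]
      rw [Finset.sum_comm]
      simp only [mul_assoc]
    have e3 : ∀ (w : ι → ℝ), (∀ ij, 0 ≤ L ij ⬝ᵥ w) ↔ ∃ y, ∀ i, a i * y ≤ w i := by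
      intro w
      constructor
      · intro h
        apply fm_one
        · intro i hi
          have := h (i, i)
          simpa [L, hi] using this
        · intro i j hi hj
          have := h (i, j)
          simpa [L, hi, hj] using this
      · rintro ⟨y, hy⟩ ⟨i, j⟩
        simp only [L]
        split_ifs with h1 h2
        · simp only [sub_dotProduct, smul_dotProduct, single_dotProduct, one_mul, smul_eq_mul]
          have := mul_le_mul_of_nonneg_left (hy j) h1.1.le
          have := mul_le_mul_of_nonneg_left (hy i) (neg_nonneg.2 h1.2.le)
          nlinarith
        · have := hy i
          rw [h2] at this
          simpa using this
        · simp
    have e4 : ∀ (y : Fin m → ℝ), (∀ ij, (fun l : Fin m => L ij ⬝ᵥ (fun i => A i l.succ)) ⬝ᵥ y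
        ≤ L ij ⬝ᵥ t) ↔ ∃ y0, ∀ i, a i * y0 + (fun l : Fin m => A i l.succ) ⬝ᵥ y ≤ t i := by
      intro y
      have := e3 (t - fun i => (fun l : Fin m => A i l.succ) ⬝ᵥ y)
      simp only [dotProduct_sub, ← e2, Pi.sub_apply, le_sub_iff_add_le, zero_add] at this
      exact this
    simp only [e4]
    constructor
    · rintro ⟨y, hy⟩
      refine ⟨fun l => y l.succ, y 0, fun i => ?_⟩
      have := hy i
      simpa [dotProduct, Fin.sum_univ_succ] using this
    · rintro ⟨y, y0, hy⟩
      refine ⟨Fin.cons y0 y, fun i => ?_⟩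
      have := hy i
      simpa [dotProduct, Fin.sum_univ_succ] using this

lemma lp_value {m : ℕ} {ι : Type} [Fintype ι] (A : ι → Fin m → ℝ) (d : Fin m → ℝ)
    (t0 : ι → ℝ) (y0 : Fin m → ℝ) (hy0 : ∀ i, A i ⬝ᵥ y0 ≤ t0 i)
    (β : ℝ) (hβ : ∀ y : Fin m → ℝ, (∀ i, A i ⬝ᵥ y ≤ t0 i) → β ≤ d ⬝ᵥ y) :
    ∃ V : (ι → ℝ) → ℝ, Continuous V ∧ (∃ K : ℝ, 0 ≤ K ∧ ∀ t, |V t| ≤ K * ‖t‖) ∧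
      ∀ t, (∃ y : Fin m → ℝ, ∀ i, A i ⬝ᵥ y ≤ t i) →
        (∃ y : Fin m → ℝ, (∀ i, A i ⬝ᵥ y ≤ t i) ∧ d ⬝ᵥ y ≤ V t) ∧
        ∀ y : Fin m → ℝ, (∀ i, A i ⬝ᵥ y ≤ t i) → V t ≤ d ⬝ᵥ y := by
  classical
  obtain ⟨U, hU⟩ := fm_elim m (Option ι) (fun o => o.elim d A)
  have hU' : ∀ (t : ι → ℝ) (r : ℝ), (∃ y : Fin m → ℝ, d ⬝ᵥ y ≤ r ∧ ∀ i, A i ⬝ᵥ y ≤ t i) ↔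
      ∀ u ∈ U, 0 ≤ u none * r + ∑ i, u (some i) * t i := by
    intro t r
    have := hU (fun o => o.elim r t)
    simpa [Option.forall, dotProduct, Fintype.sum_option] using this
  have hnn : ∀ u ∈ U, 0 ≤ u none := by
    intro u hu
    by_contra hneg
    push Not at hneg
    set S := ∑ i, u (some i) * t0 i
    have h := (hU' t0 (max (d ⬝ᵥ y0) ((S + 1) / (-u none)))).1 ⟨y0, le_max_left _ _, hy0⟩ u hu
    have h2 := le_max_right (d ⬝ᵥ y0) ((S + 1) / (-u none))
    rw [div_le_iff₀ (by linarith)] at h2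
    change 0 ≤ _ + S at h
    nlinarith
  have hWne : (U.filter (fun u => 0 < u none)).Nonempty := by
    by_contra hW
    rw [Finset.not_nonempty_iff_eq_empty, Finset.filter_eq_empty_iff] at hW
    have hz : ∀ u ∈ U, u none = 0 := fun u hu => le_antisymm (not_lt.1 (hW hu)) (hnn u hu)
    have h1 := (hU' t0 (d ⬝ᵥ y0)).1 ⟨y0, le_rfl, hy0⟩
    obtain ⟨y, hy, hy'⟩ := (hU' t0 (β - 1)).2 (fun u hu => by
      have := h1 u hu
      rw [hz u hu] at this ⊢
      simpa using this)
    have := hβ y hy'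
    linarith
  set W := U.filter (fun u => 0 < u none) with hWdef
  let lin : (Option ι → ℝ) → (ι → ℝ) → ℝ := fun u t => -(∑ i, u (some i) * t i) / u none
  have hfeas : ∀ t, (∃ y : Fin m → ℝ, ∀ i, A i ⬝ᵥ y ≤ t i) → ∀ r,
      (∃ y : Fin m → ℝ, d ⬝ᵥ y ≤ r ∧ ∀ i, A i ⬝ᵥ y ≤ t i) ↔ W.sup' hWne (fun u => lin u t) ≤ r := by
    rintro t ⟨y, hy⟩ r
    have h1 := (hU' t (d ⬝ᵥ y)).1 ⟨y, le_rfl, hy⟩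
    rw [hU', Finset.sup'_le_iff]
    constructor
    · intro h u hu
      rw [hWdef, Finset.mem_filter] at hu
      have := h u hu.1
      simp only [lin]
      rw [div_le_iff₀ hu.2]
      linarith
    · intro h u hu
      rcases (hnn u hu).eq_or_lt with h0 | h0
      · have := h1 u hu
        rw [← h0] at this ⊢
        simpa using this
      · have := h u (Finset.mem_filter.2 ⟨hu, h0⟩)
        simp only [lin] at this
        rw [div_le_iff₀ h0] at this
        linarith
  refine ⟨fun t => W.sup' hWne (fun u => lin u t), ?_, ?_, ?_⟩
  · apply Continuous.finset_sup'_apply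
    intro u _
    simp only [lin]
    fun_prop
  · let k : (Option ι → ℝ) → ℝ := fun u => (∑ i, |u (some i)|) / |u none|
    have hk : ∀ u, 0 ≤ k u := fun u => by positivity
    have hlin : ∀ u t, |lin u t| ≤ k u * ‖t‖ := by
      intro u t
      simp only [lin, k, abs_div, abs_neg]
      rw [div_mul_eq_mul_div, Finset.sum_mul]
      gcongr
      refine (Finset.abs_sum_le_sum_abs _ _).trans (Finset.sum_le_sum fun i _ => ?_)
      rw [abs_mul]
      gcongr
      exact norm_le_pi_norm t i
    have hk2 : ∀ u ∈ W, k u ≤ ∑ u ∈ W, k u := fun u hu =>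
      Finset.single_le_sum (f := k) (fun u _ => hk u) hu
    refine ⟨∑ u ∈ W, k u, Finset.sum_nonneg fun u _ => hk u, fun t => ?_⟩
    have hb : ∀ u ∈ W, |lin u t| ≤ (∑ u ∈ W, k u) * ‖t‖ := fun u hu =>
      (hlin u t).trans (by gcongr; exact hk2 u hu)
    rw [abs_le]
    constructor
    · obtain ⟨u, hu⟩ := hWne
      exact (abs_le.1 (hb u hu)).1.trans (Finset.le_sup' (fun u => lin u t) hu)
    · exact Finset.sup'_le _ _ fun u hu => (abs_le.1 (hb u hu)).2
  · intro t ht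
    constructor
    · obtain ⟨y, h1, h2⟩ := (hfeas t ht _).2 le_rfl
      exact ⟨y, h2, h1⟩
    · intro y hy
      exact (hfeas t ht _).1 ⟨y, le_rfl, hy⟩

lemma fE_repr {n m s : ℕ}
    (c : Fin n → ℝ) (q d : Fin m → ℝ)
    (A : Matrix (Fin s) (Fin m) ℝ) (T : Matrix (Fin s) (Fin n) ℝ)
    (hdom : (domf c q d A T).Nonempty) (hP : Pfeas A T = Set.univ) :
    ∃ g : (Fin s → ℝ) → ℝ, Continuous g ∧ (∃ K : ℝ, 0 ≤ K ∧ ∀ t, |g t| ≤ K * ‖t‖) ∧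
      ∀ x z, fE c q d A T x z = ((c ⬝ᵥ x + g (T.mulVec x + z) : ℝ) : EReal) := by
  classical
  obtain ⟨⟨x0, z0⟩, hntop, hnbot⟩ := hdom
  simp only at hntop hnbot
  have hne : (Psi d A T x0 z0).Nonempty := by
    by_contra h
    rw [Set.not_nonempty_iff_eq_empty] at h
    apply hntop
    simp [fE, h]
  obtain ⟨y0, hy0, hy0min⟩ := hne
  have hlf : ∀ x z y, y ∈ LowerFeas A T x z ↔ ∀ i, A i ⬝ᵥ y ≤ (T.mulVec x + z) i := by
    intro x z y; rfl
  obtain ⟨V, hVc, ⟨K, hK0, hK⟩, hV⟩ := lp_value (fun i => A i) d (T.mulVec x0 + z0) y0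
    ((hlf _ _ _).1 hy0) (d ⬝ᵥ y0) (fun y hy => hy0min y ((hlf _ _ _).2 hy))
  have hfeas : ∀ x z, ∃ y : Fin m → ℝ, ∀ i, A i ⬝ᵥ y ≤ (T.mulVec x + z) i := by
    intro x z
    have : (x, z) ∈ Pfeas A T := by rw [hP]; trivial
    exact this
  let A' : Option (Fin s) → Fin m → ℝ := fun o => o.elim d (fun i => A i)
  let tt : (Fin s → ℝ) → Option (Fin s) → ℝ := fun t o => o.elim (V t) t
  have hPsi : ∀ x z y, y ∈ Psi d A T x z ↔ ∀ o, A' o ⬝ᵥ y ≤ tt (T.mulVec x + z) o := by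
    intro x z y
    simp only [Option.forall, A', tt, Option.elim]
    constructor
    · rintro ⟨h1, h2⟩
      refine ⟨?_, (hlf _ _ _).1 h1⟩
      obtain ⟨⟨y', hy', hy''⟩, -⟩ := hV _ (hfeas x z)
      exact (h2 y' ((hlf _ _ _).2 hy')).trans hy''
    · rintro ⟨h1, h2⟩
      refine ⟨(hlf _ _ _).2 h2, fun y' hy' => h1.trans ?_⟩
      exact (hV _ (hfeas x z)).2 y' ((hlf _ _ _).1 hy')
  have hPne : ∀ x z, (Psi d A T x z).Nonempty := by
    intro x z
    obtain ⟨⟨y', hy', hy''⟩, -⟩ := hV _ (hfeas x z)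
    refine ⟨y', (hPsi _ _ _).2 ?_⟩
    simp only [Option.forall, A', tt, Option.elim]
    exact ⟨hy'', hy'⟩
  have hβ : ∃ β : ℝ, ∀ y ∈ Psi d A T x0 z0, β ≤ q ⬝ᵥ y := by
    have : sInf ((fun y => ((q ⬝ᵥ y : ℝ) : EReal)) '' Psi d A T x0 z0) ≠ ⊥ := by
      intro h
      apply hnbot
      simp [fE, h]
    obtain ⟨β, hβ⟩ := EReal.lt_iff_exists_real_btwn.1 (bot_lt_iff_ne_bot.2 this)
    refine ⟨β, fun y hy => ?_⟩
    have := hβ.2.le.trans (sInf_le (Set.mem_image_of_mem _ hy))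
    exact_mod_cast this
  obtain ⟨β, hβ⟩ := hβ
  obtain ⟨V2, hV2c, ⟨K2, hK20, hK2⟩, hV2⟩ := lp_value A' q (tt (T.mulVec x0 + z0)) y0
    ((hPsi _ _ _).1 ⟨hy0, hy0min⟩) β (fun y hy => hβ y ((hPsi _ _ _).2 hy))
  refine ⟨fun t => V2 (tt t), ?_, ⟨K2 * (1 + K), by positivity, fun t => ?_⟩, fun x z => ?_⟩
  · apply hV2c.comp
    apply continuous_pi
    rintro (_ | i)
    · exact hVc
    · exact continuous_apply i
  · refine (hK2 _).trans ?_
    rw [mul_assoc]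
    gcongr
    rw [pi_norm_le_iff_of_nonneg (by positivity)]
    rintro (_ | i)
    · have := hK t
      simp only [tt, Option.elim, Real.norm_eq_abs]
      nlinarith [norm_nonneg t]
    · have := norm_le_pi_norm t i
      simp only [tt, Option.elim]
      nlinarith [norm_nonneg t]
  · obtain ⟨y1, hy1⟩ := hPne x z
    obtain ⟨⟨y, hy, hy'⟩, hmin⟩ := hV2 (tt (T.mulVec x + z)) ⟨y1, (hPsi _ _ _).1 hy1⟩
    have : sInf ((fun y => ((q ⬝ᵥ y : ℝ) : EReal)) '' Psi d A T x z)
        = ((V2 (tt (T.mulVec x + z)) : ℝ) : EReal) := by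
      apply le_antisymm
      · refine (sInf_le (Set.mem_image_of_mem _ ((hPsi _ _ _).2 hy))).trans ?_
        exact_mod_cast hy'
      · apply le_sInf
        rintro _ ⟨y', hy', rfl⟩
        exact EReal.coe_le_coe_iff.2 (hmin y' ((hPsi _ _ _).1 hy'))
    rw [fE, this, EReal.coe_add]

/-- convexity and monotonicity give upper continuity in positive directions -/
lemma risk_upper {Ω : Type*} [MeasureSpace Ω] [IsProbabilityMeasure (volume : Measure Ω)]
    (p : ℝ≥0∞) [hp1 : Fact (1 ≤ p)]
    (R : Lp ℝ p (volume : Measure Ω) → ℝ)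
    (hconv : ConvexOn ℝ Set.univ R)
    (hmono : ∀ Y₁ Y₂ : Lp ℝ p (volume : Measure Ω),
      (Y₁ : Ω → ℝ) ≤ᵐ[volume] (Y₂ : Ω → ℝ) → R Y₁ ≤ R Y₂)
    (Y : Lp ℝ p (volume : Measure Ω)) (ε : ℝ) (hε : 0 < ε) :
    ∃ δ > 0, ∀ D : Lp ℝ p (volume : Measure Ω), 0 ≤ D → ‖D‖ < δ → R (Y + D) ≤ R Y + ε := by
  by_contra hcon
  push Not at hcon
  choose D hD0 hDn hDR using fun k : ℕ => hcon ((1 / 4 : ℝ) ^ k) (by positivity)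
  have hmono' : ∀ Y₁ Y₂ : Lp ℝ p (volume : Measure Ω), Y₁ ≤ Y₂ → R Y₁ ≤ R Y₂ :=
    fun Y₁ Y₂ h => hmono _ _ ((Lp.coeFn_le _ _).2 h)
  have hsum : Summable (fun k : ℕ => (2 : ℝ) ^ k • D k) := by
    apply Summable.of_norm_bounded (g := fun k : ℕ => (1 / 2 : ℝ) ^ k) (by
      exact summable_geometric_of_lt_one (by norm_num) (by norm_num))
    intro k
    rw [norm_smul, norm_pow, Real.norm_ofNat]
    calc (2 : ℝ) ^ k * ‖D k‖ ≤ 2 ^ k * (1 / 4) ^ k := by gcongr; exact (hDn k).le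
      _ = (1 / 2) ^ k := by rw [← mul_pow]; norm_num
  set Z := ∑' k : ℕ, (2 : ℝ) ^ k • D k with hZ
  have hterm : ∀ k : ℕ, 0 ≤ (2 : ℝ) ^ k • D k := fun k => by
    rw [← Lp.coeFn_le]
    filter_upwards [(Lp.coeFn_le _ _).2 (hD0 k), Lp.coeFn_smul ((2 : ℝ) ^ k) (D k),
      Lp.coeFn_zero ℝ p (volume : Measure Ω)] with ω h1 h2 h3
    rw [h2, h3]
    rw [h3] at h1
    simp only [Pi.smul_apply, smul_eq_mul, Pi.zero_apply] at *
    positivity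
  have hle : ∀ k : ℕ, (2 : ℝ) ^ k • D k ≤ Z := fun k => hsum.le_tsum k (fun j _ => hterm j)
  have hle2 : ∀ k : ℕ, D k ≤ ((1 / 2 : ℝ) ^ k) • Z := fun k => by
    rw [← Lp.coeFn_le]
    filter_upwards [(Lp.coeFn_le _ _).2 (hle k), Lp.coeFn_smul ((2 : ℝ) ^ k) (D k),
      Lp.coeFn_smul ((1 / 2 : ℝ) ^ k) Z] with ω h1 h2 h3
    rw [h3]
    rw [h2] at h1
    simp only [Pi.smul_apply, smul_eq_mul] at *
    have h4 : (1 / 2 : ℝ) ^ k * (2 ^ k * (D k : Ω → ℝ) ω) = (D k : Ω → ℝ) ω := by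
      rw [← mul_assoc, ← mul_pow]; norm_num
    rw [← h4]
    gcongr
  have hb : ∀ k : ℕ, ε ≤ (1 / 2 : ℝ) ^ k * (R (Y + Z) - R Y) := by
    intro k
    have h1 := hDR k
    have h2 : R (Y + D k) ≤ R (Y + ((1 / 2 : ℝ) ^ k) • Z) :=
      hmono' _ _ (by gcongr; exact hle2 k)
    have hk1 : (1 / 2 : ℝ) ^ k ≤ 1 := pow_le_one₀ (by norm_num) (by norm_num)
    have h3 := hconv.2 (Set.mem_univ Y) (Set.mem_univ (Y + Z))
      (show 0 ≤ 1 - (1 / 2 : ℝ) ^ k by linarith) (show 0 ≤ (1 / 2 : ℝ) ^ k by positivity) (by ring)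
    have h4 : (1 - (1 / 2 : ℝ) ^ k) • Y + ((1 / 2 : ℝ) ^ k) • (Y + Z) = Y + ((1 / 2 : ℝ) ^ k) • Z := by
      rw [sub_smul, smul_add, one_smul]; abel
    rw [h4] at h3
    simp only [smul_eq_mul] at h3
    nlinarith
  have hlim : Tendsto (fun k : ℕ => (1 / 2 : ℝ) ^ k * (R (Y + Z) - R Y)) atTop (𝓝 0) := by
    simpa using (tendsto_pow_atTop_nhds_zero_of_lt_one (r := (1 / 2 : ℝ)) (by norm_num) (by norm_num)).mul_const (R (Y + Z) - R Y)
  have := ge_of_tendsto' hlim hb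
  linarith

/-- the chosen almost-optimal split of a set -/
lemma exists_good_split {Ω : Type*} [MeasurableSpace Ω] (P : Measure Ω) [IsProbabilityMeasure P]
    (S : Set Ω) :
    ∃ B, MeasurableSet B ∧ ∀ C, MeasurableSet C → 
      min (P (S ∩ C)) (P (S \ C)) ≤ 2 * min (P (S ∩ B)) (P (S \ B)) := by
  set σ := ⨆ C : {C : Set Ω // MeasurableSet C}, min (P (S ∩ C)) (P (S \ C)) with hσ
  have hσ1 : σ ≤ 1 := iSup_le fun C => (min_le_left _ _).trans prob_le_one
  have hle : ∀ C, MeasurableSet C → min (P (S ∩ C)) (P (S \ C)) ≤ σ := fun C hC =>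
    le_iSup (fun C : {C : Set Ω // MeasurableSet C} => min (P (S ∩ C)) (P (S \ C))) ⟨C, hC⟩
  by_cases h0 : σ = 0
  · refine ⟨∅, MeasurableSet.empty, fun C hC => ?_⟩
    have := hle C hC
    rw [h0] at this
    exact this.trans zero_le
  · have hlt : σ / 2 < σ := ENNReal.half_lt_self h0 (hσ1.trans_lt ENNReal.one_lt_top).ne
    obtain ⟨⟨B, hB⟩, hBlt⟩ := lt_iSup_iff.1 (hσ ▸ hlt)
    refine ⟨B, hB, fun C hC => (hle C hC).trans ?_⟩
    have : σ = 2 * (σ / 2) := (ENNReal.mul_div_cancel (by norm_num) (by norm_num)).symm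
    rw [this]
    gcongr

/-- cells of the dyadic splitting tree -/
def cellOf {Ω : Type*} (sp : Set Ω → Set Ω) : List Bool → Set Ω
  | [] => Set.univ
  | b :: l => if b then cellOf sp l ∩ sp (cellOf sp l) else cellOf sp l \ sp (cellOf sp l)

open Classical in
/-- the address of a point in the splitting tree -/
def addr {Ω : Type*} (sp : Set Ω → Set Ω) (ω : Ω) : ℕ → List Bool
  | 0 => []
  | k + 1 => decide (ω ∈ sp (cellOf sp (addr sp ω k))) :: addr sp ω k

lemma mem_cellOf_addr {Ω : Type*} (sp : Set Ω → Set Ω) (ω : Ω) (k : ℕ) :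
    ω ∈ cellOf sp (addr sp ω k) := by
  induction k with
  | zero => simp [addr, cellOf]
  | succ k ih =>
    by_cases h : ω ∈ sp (cellOf sp (addr sp ω k)) <;> simp [addr, cellOf, h, ih]

lemma measurable_cellOf {Ω : Type*} [MeasurableSpace Ω] (sp : Set Ω → Set Ω)
    (hsp : ∀ S, MeasurableSet (sp S)) (l : List Bool) : MeasurableSet (cellOf sp l) := by
  induction l with
  | nil => exact MeasurableSet.univ
  | cons b l ih =>
    unfold cellOf
    split_ifs
    · exact ih.inter (hsp _)
    · exact ih.diff (hsp _)

lemma measurableSet_addr_eq {Ω : Type*} [MeasurableSpace Ω] (sp : Set Ω → Set Ω)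
    (hsp : ∀ S, MeasurableSet (sp S)) (k : ℕ) (l : List Bool) :
    MeasurableSet {ω | addr sp ω k = l} := by
  induction k generalizing l with
  | zero => simp [addr]
  | succ k ih =>
    cases l with
    | nil => simp [addr]
    | cons b l =>
      have : {ω | addr sp ω (k + 1) = b :: l} =
          {ω | addr sp ω k = l} ∩ (if b then sp (cellOf sp l) else (sp (cellOf sp l))ᶜ) := by
        ext ω
        simp only [addr, List.cons.injEq, Set.mem_ofPred_eq, Set.mem_inter_iff]
        constructor
        · rintro ⟨h1, h2⟩
          rw [h2] at h1
          refine ⟨h2, ?_⟩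
          cases b <;> simpa using h1
        · rintro ⟨h1, h2⟩
          rw [h1]
          refine ⟨?_, rfl⟩
          cases b <;> simpa using h2
      rw [this]
      apply (ih l).inter
      split_ifs
      · exact hsp _
      · exact (hsp _).compl

/-- an atomless space carries a real random variable with diffuse law -/
lemma exists_diffuse {Ω : Type*} [MeasurableSpace Ω] (P : Measure Ω) [IsProbabilityMeasure P]
    (hP : AtomlessSpace P) :
    ∃ V : Ω → ℝ, Measurable V ∧ ∀ v, P (V ⁻¹' {v}) = 0 := by
  choose sp hsp hsp2 using exists_good_split P
  let D : Ω → ℕ → List Bool := fun ω k => addr sp ω k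
  let _ : MeasurableSpace (List Bool) := ⊤
  have : DiscreteMeasurableSpace (List Bool) := ⟨fun _ => trivial⟩
  have hD : Measurable D := by
    apply measurable_pi_lambda
    intro k
    apply measurable_to_countable'
    intro l
    exact measurableSet_addr_eq sp hsp k l
  have : StandardBorelSpace (List Bool) := inferInstance
  obtain ⟨e, he⟩ := MeasureTheory.exists_measurableEmbedding_real (ℕ → List Bool)
  refine ⟨e ∘ D, he.measurable.comp hD, fun v => ?_⟩
  by_contra hpos
  have hpos' : 0 < P ((e ∘ D) ⁻¹' {v}) := pos_iff_ne_zero.2 hpos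
  set S := (e ∘ D) ⁻¹' {v} with hS
  have hSm : MeasurableSet S := (he.measurable.comp hD) (measurableSet_singleton v)
  obtain ⟨ω0, hω0⟩ : S.Nonempty := by
    by_contra h
    rw [Set.not_nonempty_iff_eq_empty] at h
    simp [h] at hpos
  have hDeq : ∀ ω ∈ S, D ω = D ω0 := fun ω hω => he.injective (by
    have h1 : e (D ω) = v := hω
    have h2 : e (D ω0) = v := hω0
    rw [h1, h2])
  let cell : ℕ → Set Ω := fun k => cellOf sp (addr sp ω0 k)
  have hScell : ∀ k, S ⊆ cell k := by
    intro k ω hω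
    have := mem_cellOf_addr sp ω k
    have h2 : addr sp ω k = addr sp ω0 k := congrFun (hDeq ω hω) k
    rw [h2] at this
    exact this
  obtain ⟨C, hCS, hCm, hC0, hClt⟩ := hP S hSm hpos'
  set δ := min (P C) (P (S \ C)) with hδ
  have hδ0 : 0 < δ := by
    apply lt_min hC0
    rw [pos_iff_ne_zero]
    intro h
    have h3 := measure_sdiff_le_iff_le_add (μ := P) hCm.nullMeasurableSet hCS (measure_ne_top P C) (ε := 0)
    have := h3.1 h.le
    simp at this
    exact absurd hClt (not_lt.2 this)
  have hstep : ∀ k, δ ≤ 2 * P (cell k \ cell (k + 1)) := by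
    intro k
    have h1 : δ ≤ min (P (cell k ∩ C)) (P (cell k \ C)) := by
      apply min_le_min
      · exact measure_mono (Set.subset_inter (hCS.trans (hScell k)) le_rfl)
      · exact measure_mono (Set.sdiff_subset_sdiff_left (hScell k))
    refine h1.trans ((hsp2 (cell k) C hCm).trans ?_)
    gcongr
    by_cases h : ω0 ∈ sp (cell k)
    · have : cell (k + 1) = cell k ∩ sp (cell k) := by
        simp only [cell] at h
        simp [cell, addr, cellOf, h]
      rw [this, Set.sdiff_self_inter]
      exact min_le_right _ _
    · have : cell (k + 1) = cell k \ sp (cell k) := by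
        simp only [cell] at h
        simp [cell, addr, cellOf, h]
      rw [this, Set.sdiff_sdiff_right_self]
      exact min_le_left _ _
  have hsub : ∀ k, cell (k + 1) ⊆ cell k := by
    intro k
    simp only [cell, addr, cellOf]
    split_ifs
    · exact Set.inter_subset_left
    · exact Set.sdiff_subset
  have hcm : ∀ k, MeasurableSet (cell k) := fun k => measurable_cellOf sp hsp _
  have hind : ∀ k : ℕ, (k : ℝ≥0∞) * δ + 2 * P (cell k) ≤ 2 := by
    intro k
    induction k with
    | zero => simpa using mul_le_mul_right (prob_le_one (μ := P) (s := cell 0)) 2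
    | succ k ih =>
      refine le_trans ?_ ih
      have h1 : P (cell k) = P (cell (k + 1)) + P (cell k \ cell (k + 1)) := by
        rw [← measure_inter_add_sdiff (cell k) (hcm (k + 1)), Set.inter_eq_right.2 (hsub k)]
      rw [h1]
      push_cast
      rw [add_mul, one_mul, mul_add, add_assoc]
      refine add_le_add le_rfl ?_
      rw [add_comm]
      exact add_le_add le_rfl (hstep k)
  have hind2 : ∀ k : ℕ, (k : ℝ≥0∞) * δ ≤ 2 := fun k => le_self_add.trans (hind k)
  have hδtop : δ ≠ ⊤ := ((min_le_left _ _).trans_lt (measure_lt_top P C)).ne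
  obtain ⟨k, hk⟩ := ENNReal.exists_nat_mul_gt hδ0.ne' (b := 2) (by norm_num)
  exact absurd (hind2 k) (not_le.2 hk)

open ProbabilityTheory in
/-- an atomless space carries a uniform random variable -/
lemma exists_uniform {Ω : Type*} [MeasurableSpace Ω] (P : Measure Ω) [IsProbabilityMeasure P]
    (V : Ω → ℝ) (hV : Measurable V) (hV0 : ∀ v, P (V ⁻¹' {v}) = 0) :
    ∃ U : Ω → ℝ, Measurable U ∧ (∀ ω, U ω ∈ Set.Ioo (0 : ℝ) 1) ∧
      Measure.map U P = volume.restrict (Set.Ioo (0 : ℝ) 1) := by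
  classical
  have hρ : IsProbabilityMeasure (Measure.map V P) := Measure.isProbabilityMeasure_map hV.aemeasurable
  set G := cdf (Measure.map V P) with hG
  have hGIic : ∀ v, P (V ⁻¹' Set.Iic v) = ENNReal.ofReal (G v) := fun v => by
    rw [hG, ofReal_cdf, Measure.map_apply hV measurableSet_Iic]
  have hGc : Continuous G := by
    rw [continuous_iff_continuousAt]
    intro v
    have h1 : G.measure {v} = 0 := by
      rw [hG, measure_cdf, Measure.map_apply hV (measurableSet_singleton v), hV0]
    rw [StieltjesFunction.measure_singleton, ENNReal.ofReal_eq_zero] at h1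
    have h2 : Function.leftLim G v = G v :=
      le_antisymm (G.mono.leftLim_le le_rfl) (by linarith)
    rw [continuousAt_iff_continuous_left_right]
    refine ⟨?_, G.right_continuous v⟩
    rw [← continuousWithinAt_Iio_iff_Iic]
    exact G.mono.continuousWithinAt_Iio_iff_leftLim_eq.2 h2
  have hIVT : ∀ t ∈ Set.Ioo (0 : ℝ) 1, ∃ b, G b = t := by
    intro t ht
    obtain ⟨a, ha⟩ := ((tendsto_cdf_atBot (Measure.map V P)).eventually_lt_const ht.1).exists
    obtain ⟨b, hb⟩ := ((tendsto_cdf_atTop (Measure.map V P)).eventually_const_lt ht.2).exists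
    exact mem_range_of_exists_le_of_exists_ge hGc ⟨a, ha.le⟩ ⟨b, hb.le⟩
  have hU0m : Measurable (fun ω => G (V ω)) := hGc.measurable.comp hV
  have hle : ∀ t ∈ Set.Ioo (0 : ℝ) 1, ENNReal.ofReal t ≤ P {ω | G (V ω) ≤ t} := by
    intro t ht
    obtain ⟨b, hb⟩ := hIVT t ht
    rw [← hb, ← hGIic]
    exact measure_mono fun ω hω => G.mono hω
  have hge : ∀ t, 0 ≤ t → t < 1 → P {ω | G (V ω) ≤ t} ≤ ENNReal.ofReal t := by
    intro t ht0 ht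
    have : ∀ t' ∈ Set.Ioo t 1, P {ω | G (V ω) ≤ t} ≤ ENNReal.ofReal t' := by
      intro t' ht'
      obtain ⟨b, hb⟩ := hIVT t' ⟨ht0.trans_lt ht'.1, ht'.2⟩
      rw [← hb, ← hGIic]
      refine measure_mono fun ω hω => ?_
      have h1 : G (V ω) ≤ t := hω
      have h2 : G (V ω) < G b := by rw [hb]; exact h1.trans_lt ht'.1
      exact (G.mono.reflect_lt h2).le
    have hlim : Tendsto ENNReal.ofReal (𝓝[>] t) (𝓝 (ENNReal.ofReal t)) :=
      (ENNReal.continuous_ofReal.tendsto t).mono_left nhdsWithin_le_nhds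
    refine ge_of_tendsto hlim ?_
    filter_upwards [Ioo_mem_nhdsGT ht] with t' ht' using this t' ht'
  have hmap : Measure.map (fun ω => G (V ω)) P = volume.restrict (Set.Ioo (0 : ℝ) 1) := by
    have : IsFiniteMeasure (Measure.map (fun ω => G (V ω)) P) := inferInstance
    apply Measure.ext_of_Iic
    intro t
    rw [Measure.map_apply hU0m measurableSet_Iic, Measure.restrict_apply measurableSet_Iic]
    change P {ω | G (V ω) ≤ t} = _
    rcases lt_or_ge t 0 with h | h
    · have e1 : {ω | G (V ω) ≤ t} = ∅ := by
        ext ω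
        simp only [Set.mem_ofPred_eq, Set.mem_empty_iff_false, iff_false, not_le]
        exact h.trans_le (cdf_nonneg _ _)
      have e2 : Set.Iic t ∩ Set.Ioo 0 1 = ∅ := by
        ext x; simp only [Set.mem_inter_iff, Set.mem_Iic, Set.mem_Ioo, Set.mem_empty_iff_false, iff_false]
        intro hx; linarith [hx.1, hx.2.1]
      rw [e1, e2]; simp
    rcases lt_or_ge t 1 with h1 | h1
    · have e2 : Set.Iic t ∩ Set.Ioo 0 1 = Set.Ioc 0 t := by
        ext x; simp only [Set.mem_inter_iff, Set.mem_Iic, Set.mem_Ioo, Set.mem_Ioc]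
        constructor
        · rintro ⟨a, b, c⟩; exact ⟨b, a⟩
        · rintro ⟨a, b⟩; exact ⟨b, a, b.trans_lt h1⟩
      rw [e2, Real.volume_Ioc, sub_zero]
      refine le_antisymm (hge t h h1) ?_
      rcases h.eq_or_lt with h0 | h0
      · rw [← h0]; simp
      · exact hle t ⟨h0, h1⟩
    · have e1 : {ω | G (V ω) ≤ t} = Set.univ := by
        ext ω
        simp only [Set.mem_ofPred_eq, Set.mem_univ, iff_true]
        exact (cdf_le_one _ _).trans h1
      have e2 : Set.Iic t ∩ Set.Ioo 0 1 = Set.Ioo 0 1 := by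
        apply Set.inter_eq_right.2
        intro x hx; exact (hx.2.trans_le h1).le
      rw [e1, e2, Real.volume_Ioo]; simp
  have hae : ∀ᵐ ω ∂P, G (V ω) ∈ Set.Ioo (0 : ℝ) 1 := by
    have h1 : ∀ᵐ u ∂(Measure.map (fun ω => G (V ω)) P), u ∈ Set.Ioo (0 : ℝ) 1 := by
      rw [hmap]; exact ae_restrict_mem measurableSet_Ioo
    exact ae_of_ae_map hU0m.aemeasurable h1
  refine ⟨fun ω => if G (V ω) ∈ Set.Ioo (0 : ℝ) 1 then G (V ω) else 1 / 2, ?_, ?_, ?_⟩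
  · exact Measurable.ite (hU0m measurableSet_Ioo) hU0m measurable_const
  · intro ω
    dsimp only
    split_ifs with h
    · exact h
    · norm_num
  · rw [← hmap]
    apply Measure.map_congr
    filter_upwards [hae] with ω h
    rw [if_pos h]

open ProbabilityTheory in
/-- quantile function -/
def quantl (lam : Measure ℝ) (u : ℝ) : ℝ := sInf {x | u ≤ cdf lam x}

open ProbabilityTheory in
lemma quantl_le_iff (lam : Measure ℝ) (u : ℝ) (hu : u ∈ Set.Ioo (0 : ℝ) 1) (x : ℝ) :
    quantl lam u ≤ x ↔ u ≤ cdf lam x := by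
  have hbdd : BddBelow {x | u ≤ cdf lam x} := by
    obtain ⟨a, ha⟩ := ((tendsto_cdf_atBot lam).eventually_lt_const hu.1).exists
    refine ⟨a, fun y hy => ?_⟩
    have hy' : u ≤ cdf lam y := hy
    exact ((cdf lam).mono.reflect_lt (ha.trans_le hy')).le
  have hne : {x | u ≤ cdf lam x}.Nonempty := by
    obtain ⟨b, hb⟩ := ((tendsto_cdf_atTop lam).eventually_const_lt hu.2).exists
    exact ⟨b, hb.le⟩
  constructor
  · intro h
    have hgt : ∀ y > x, u ≤ cdf lam y := by
      intro y hy
      obtain ⟨w, hw, hwy⟩ := exists_lt_of_csInf_lt hne (h.trans_lt hy)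
      exact le_trans hw ((cdf lam).mono hwy.le)
    have hr := ((cdf lam).right_continuous x).mono_left (nhdsWithin_mono x Set.Ioi_subset_Ici_self)
    refine ge_of_tendsto hr ?_
    filter_upwards [self_mem_nhdsWithin] with y hy using hgt y hy
  · intro h
    exact csInf_le hbdd h

open ProbabilityTheory in
lemma quantl_law {Ω : Type*} [MeasurableSpace Ω] (P : Measure Ω) [IsProbabilityMeasure P]
    (U : Ω → ℝ) (hU : Measurable U) (hU1 : ∀ ω, U ω ∈ Set.Ioo (0 : ℝ) 1)
    (hmap : Measure.map U P = volume.restrict (Set.Ioo (0 : ℝ) 1))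
    (lam : Measure ℝ) [IsProbabilityMeasure lam] :
    Measurable (fun ω => quantl lam (U ω)) ∧ Measure.map (fun ω => quantl lam (U ω)) P = lam := by
  have hset : ∀ x, (fun ω => quantl lam (U ω)) ⁻¹' Set.Iic x = U ⁻¹' Set.Iic (cdf lam x) := by
    intro x
    ext ω
    exact quantl_le_iff lam (U ω) (hU1 ω) x
  have hm : Measurable (fun ω => quantl lam (U ω)) := by
    apply measurable_of_Iic
    intro x
    rw [hset]
    exact hU measurableSet_Iic
  refine ⟨hm, ?_⟩
  have : IsProbabilityMeasure (Measure.map (fun ω => quantl lam (U ω)) P) :=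
    Measure.isProbabilityMeasure_map hm.aemeasurable
  apply Measure.ext_of_Iic
  intro x
  rw [Measure.map_apply hm measurableSet_Iic, hset, ← Measure.map_apply hU measurableSet_Iic, hmap,
    Measure.restrict_apply measurableSet_Iic, ← ofReal_cdf]
  have h0 := cdf_nonneg lam x
  have h1 := cdf_le_one lam x
  apply le_antisymm
  · refine (measure_mono (t := Set.Ioc 0 (cdf lam x)) ?_).trans ?_
    · rintro y ⟨hy1, hy2⟩; exact ⟨hy2.1, hy1⟩
    · rw [Real.volume_Ioc, sub_zero]
  · refine le_trans ?_ (measure_mono (s := Set.Ioo 0 (cdf lam x)) ?_)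
    · rw [Real.volume_Ioo, sub_zero]
    · rintro y ⟨hy1, hy2⟩; exact ⟨hy2.le, hy1, hy2.trans_le h1⟩

open ProbabilityTheory in
/-- one sided almost sure convergence of the quantiles -/
lemma quantl_usc {Ω : Type*} [MeasurableSpace Ω] (P : Measure Ω) [IsProbabilityMeasure P]
    (U : Ω → ℝ) (hU : Measurable U) (hU1 : ∀ ω, U ω ∈ Set.Ioo (0 : ℝ) 1)
    (hmap : Measure.map U P = volume.restrict (Set.Ioo (0 : ℝ) 1))
    {s : ℕ} (f : (Fin s → ℝ) → ℝ) (hf : Continuous f)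
    (μ : ProbabilityMeasure (Fin s → ℝ)) :
    ∀ᵐ ω ∂P, ∀ x, quantl (Measure.map f (μ : Measure (Fin s → ℝ))) (U ω) < x →
      ∀ᶠ ν : ProbabilityMeasure (Fin s → ℝ) in 𝓝 μ, 
        quantl (Measure.map f (ν : Measure (Fin s → ℝ))) (U ω) ≤ x := by
  have hpr : ∀ ν : ProbabilityMeasure (Fin s → ℝ),
      IsProbabilityMeasure (Measure.map f (ν : Measure (Fin s → ℝ))) := fun ν =>
    Measure.isProbabilityMeasure_map hf.measurable.aemeasurable
  set lam := Measure.map f (μ : Measure (Fin s → ℝ)) with hlam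
  have hcount : (Set.range (fun r : ℚ => cdf lam (r : ℝ))).Countable := Set.countable_range _
  have hnull : ∀ᵐ ω ∂P, U ω ∉ Set.range (fun r : ℚ => cdf lam (r : ℝ)) := by
    have h1 : ∀ᵐ u ∂(Measure.map U P), u ∉ Set.range (fun r : ℚ => cdf lam (r : ℝ)) := by
      rw [hmap]
      exact hcount.ae_notMem _
    exact ae_of_ae_map hU.aemeasurable h1
  filter_upwards [hnull] with ω hω x hx
  obtain ⟨r, hr1, hr2⟩ := exists_rat_btwn hx
  have h1 : U ω ≤ cdf lam r := (quantl_le_iff lam (U ω) (hU1 ω) r).1 hr1.le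
  have h2 : U ω < cdf lam r := lt_of_le_of_ne h1 fun h => hω ⟨r, h.symm⟩
  have hopen : IsOpen (f ⁻¹' Set.Iio x) := isOpen_Iio.preimage hf
  have h3 : ENNReal.ofReal (U ω) < (μ : Measure (Fin s → ℝ)) (f ⁻¹' Set.Iio x) := by
    calc ENNReal.ofReal (U ω) < ENNReal.ofReal (cdf lam r) :=
          (ENNReal.ofReal_lt_ofReal_iff ((hU1 ω).1.trans h2)).2 h2
      _ = lam (Set.Iic r) := ofReal_cdf _ _
      _ ≤ lam (Set.Iio x) := measure_mono fun y hy => lt_of_le_of_lt hy hr2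
      _ = _ := Measure.map_apply hf.measurable measurableSet_Iio
  have h4 := ProbabilityMeasure.le_liminf_measure_open_of_tendsto (tendsto_id (x := 𝓝 μ)) hopen
  have h5 := eventually_lt_of_lt_liminf (h3.trans_le h4)
  filter_upwards [h5] with ν hν
  rw [quantl_le_iff _ _ (hU1 ω), ← ENNReal.ofReal_le_ofReal_iff (cdf_nonneg _ _), ofReal_cdf,
    Measure.map_apply hf.measurable measurableSet_Iic]
  refine hν.le.trans (measure_mono ?_)
  intro z hz
  exact le_of_lt (show f z < x from hz)

lemma tail_small {s : ℕ} (p : ℝ≥0∞) (hp1 : 1 ≤ p) (hptop : p ≠ ⊤)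
    (M : Set (ProbabilityMeasure (Fin s → ℝ)))
    (hLUI : LocUnifIntegrating p.toReal M) (f : (Fin s → ℝ) → ℝ) 
    (K : ℝ) (hK : 1 ≤ K) (hfK : ∀ z, |f z| ≤ K * (1 + ‖z‖))
    (μ : ProbabilityMeasure (Fin s → ℝ)) (hμ : μ ∈ M) (δ : ℝ) (hδ : 0 < δ) :
    ∃ C : ℝ, 0 ≤ C ∧ ∀ᶠ ν : ProbabilityMeasure (Fin s → ℝ) in 𝓝[M] μ,
      eLpNorm (fun z => if C ≤ |f z| then f z else 0) p (ν : Measure (Fin s → ℝ))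
        ≤ ENNReal.ofReal δ := by
  have hp0 : p ≠ 0 := (zero_lt_one.trans_le hp1).ne'
  have hpr : 0 < p.toReal := ENNReal.toReal_pos hp0 hptop
  set η := δ / (2 * K) with hη
  have hη0 : 0 < η := by positivity
  obtain ⟨N, hNo, hμN, hN⟩ := hLUI μ hμ (η ^ p.toReal / 2) (by positivity)
  have hlt : ENNReal.ofReal (η ^ p.toReal / 2) < ENNReal.ofReal (η ^ p.toReal) := by
    rw [ENNReal.ofReal_lt_ofReal_iff (by positivity)]
    have : 0 < η ^ p.toReal := by positivity
    linarith
  obtain ⟨a, ha⟩ := iInf_lt_iff.1 (hN.trans_lt hlt)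
  refine ⟨K * (max a 1 + 1), by positivity, ?_⟩
  filter_upwards [self_mem_nhdsWithin, mem_nhdsWithin_of_mem_nhds (hNo.mem_nhds hμN)] with ν hνM hνN
  have hI : ∫⁻ z in {z : Fin s → ℝ | a ≤ ‖z‖}, ENNReal.ofReal (‖z‖ ^ p.toReal)
          ∂(ν : Measure (Fin s → ℝ)) ≤ ENNReal.ofReal (η ^ p.toReal) := by
    refine le_trans ?_ ha.le
    exact le_iSup₂ (f := fun (ν : ProbabilityMeasure (Fin s → ℝ)) (_ : ν ∈ M ∩ N) =>
      ∫⁻ z in {z : Fin s → ℝ | a ≤ ‖z‖}, ENNReal.ofReal (‖z‖ ^ p.toReal)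
          ∂(ν : Measure (Fin s → ℝ))) ν ⟨hνM, hνN⟩
  have hms : MeasurableSet {z : Fin s → ℝ | a ≤ ‖z‖} :=
    (isClosed_le continuous_const continuous_norm).measurableSet
  have hmono : eLpNorm (fun z => if K * (max a 1 + 1) ≤ |f z| then f z else 0) p
      (ν : Measure (Fin s → ℝ)) ≤ eLpNorm ((2 * K) • ({z : Fin s → ℝ | a ≤ ‖z‖}.indicator (fun z => ‖z‖))) p
      (ν : Measure (Fin s → ℝ)) := by
    apply eLpNorm_mono
    intro z
    split_ifs with h
    · have h1 := h.trans (hfK z)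
      have h2 : max a 1 + 1 ≤ 1 + ‖z‖ := le_of_mul_le_mul_left h1 (by linarith)
      have h3 : a ≤ ‖z‖ := by linarith [le_max_left a 1]
      have h4 : 1 ≤ ‖z‖ := by linarith [le_max_right a 1]
      rw [Pi.smul_apply, Set.indicator_of_mem (show z ∈ {z : Fin s → ℝ | a ≤ ‖z‖} from h3),
        smul_eq_mul, Real.norm_eq_abs, Real.norm_eq_abs, abs_of_nonneg (a := 2 * K * ‖z‖) (by positivity)]
      refine (hfK z).trans ?_
      nlinarith
    · rw [norm_zero]
      exact norm_nonneg _
  refine hmono.trans ?_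
  rw [eLpNorm_const_smul, eLpNorm_indicator_eq_eLpNorm_restrict hms,
    eLpNorm_eq_lintegral_rpow_enorm_toReal hp0 hptop]
  have hI2 : ∫⁻ z in {z : Fin s → ℝ | a ≤ ‖z‖}, ‖‖z‖‖ₑ ^ p.toReal ∂(ν : Measure (Fin s → ℝ))
      ≤ ENNReal.ofReal η ^ p.toReal := by
    rw [ENNReal.ofReal_rpow_of_nonneg hη0.le hpr.le]
    refine le_trans (le_of_eq ?_) hI
    congr 1
    ext z
    rw [Real.enorm_eq_ofReal (norm_nonneg z), ENNReal.ofReal_rpow_of_nonneg (norm_nonneg z) hpr.le]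
  calc _ ≤ ‖2 * K‖ₑ * (ENNReal.ofReal η ^ p.toReal) ^ (1 / p.toReal) := by gcongr
    _ = ENNReal.ofReal δ := by
      rw [← ENNReal.rpow_mul, mul_one_div_cancel hpr.ne', ENNReal.rpow_one,
        Real.enorm_eq_ofReal (by positivity), ← ENNReal.ofReal_mul (by positivity)]
      congr 1
      rw [hη]; field_simp

lemma memLp_growth {s : ℕ} (p : ℝ≥0∞) (hp1 : 1 ≤ p) (hptop : p ≠ ⊤)
    (f : (Fin s → ℝ) → ℝ) (hf : Continuous f)
    (K : ℝ) (hfK : ∀ z, |f z| ≤ K * (1 + ‖z‖))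
    (ν : ProbabilityMeasure (Fin s → ℝ))
    (hν : ∫⁻ z, ENNReal.ofReal (‖z‖ ^ p.toReal) ∂(ν : Measure (Fin s → ℝ)) < ⊤) :
    MemLp f p (ν : Measure (Fin s → ℝ)) := by
  have hp0 : p ≠ 0 := (zero_lt_one.trans_le hp1).ne'
  have hpr : 0 < p.toReal := ENNReal.toReal_pos hp0 hptop
  have h1 : MemLp (fun z : Fin s → ℝ => ‖z‖) p (ν : Measure (Fin s → ℝ)) := by
    refine ⟨continuous_norm.aestronglyMeasurable, ?_⟩
    rw [eLpNorm_lt_top_iff_lintegral_rpow_enorm_lt_top hp0 hptop]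
    refine lt_of_eq_of_lt ?_ hν
    congr 1
    ext z
    rw [Real.enorm_eq_ofReal (norm_nonneg z), ENNReal.ofReal_rpow_of_nonneg (norm_nonneg z) hpr.le]
  have h2 : MemLp (fun z : Fin s → ℝ => K * (1 + ‖z‖)) p (ν : Measure (Fin s → ℝ)) :=
    ((memLp_const (1 : ℝ)).add h1).const_mul K
  refine h2.mono hf.aestronglyMeasurable (Filter.Eventually.of_forall fun z => ?_)
  rw [Real.norm_eq_abs, Real.norm_eq_abs]
  exact (hfK z).trans (le_abs_self _)

lemma trunc_tendsto {Ω : Type*} [MeasurableSpace Ω] (P : Measure Ω) [IsProbabilityMeasure P]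
    (p : ℝ≥0∞) (hp1 : 1 ≤ p) (hptop : p ≠ ⊤) {ι : Type*} (l : Filter ι) [l.IsCountablyGenerated]
    (Y : ι → Ω → ℝ) (hY : ∀ i, Measurable (Y i)) (Y0 : Ω → ℝ) (hY0m : Measurable Y0)
    (hY0 : MemLp Y0 p P) (C : ℝ) (hC : 0 ≤ C)
    (hlim : ∀ᵐ ω ∂P, ∀ x, Y0 ω < x → ∀ᶠ i in l, Y i ω ≤ x) :
    Tendsto (fun i => eLpNorm (fun ω => max (min (Y i ω) C - Y0 ω) 0) p P) l (𝓝 0) := by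
  have hp0 : p ≠ 0 := (zero_lt_one.trans_le hp1).ne'
  have hpr : 0 < p.toReal := ENNReal.toReal_pos hp0 hptop
  simp only [eLpNorm_eq_lintegral_rpow_enorm_toReal hp0 hptop]
  have hb : MemLp (fun ω => C + |Y0 ω|) p P := (memLp_const C).add hY0.abs
  have hmain : Tendsto (fun i => ∫⁻ ω, ‖max (min (Y i ω) C - Y0 ω) 0‖ₑ ^ p.toReal ∂P) l
      (𝓝 (∫⁻ ω, 0 ∂P)) := by
    apply tendsto_lintegral_filter_of_dominated_convergence (fun ω => ‖C + |Y0 ω|‖ₑ ^ p.toReal)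
    · refine Filter.Eventually.of_forall fun i => ?_
      exact ((((hY i).min measurable_const).sub hY0m).max measurable_const).enorm.pow_const _
    · refine Filter.Eventually.of_forall fun i => Filter.Eventually.of_forall fun ω => ?_
      gcongr
      rw [enorm_le_iff_norm_le, Real.norm_eq_abs, Real.norm_eq_abs,
        abs_of_nonneg (le_max_right _ _), abs_of_nonneg (by positivity)]
      apply max_le
      · linarith [min_le_right (Y i ω) C, neg_le_abs (Y0 ω)]
      · positivity
    · exact ((eLpNorm_lt_top_iff_lintegral_rpow_enorm_lt_top hp0 hptop).1 hb.2).ne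
    · filter_upwards [hlim] with ω hω
      have h1 : Tendsto (fun i => max (min (Y i ω) C - Y0 ω) 0) l (𝓝 0) := by
        rw [Metric.tendsto_nhds]
        intro ε hε
        filter_upwards [hω (Y0 ω + ε / 2) (by linarith)] with i hi
        rw [Real.dist_eq, sub_zero, abs_of_nonneg (le_max_right _ _)]
        apply max_lt _ hε
        linarith [min_le_left (Y i ω) C]
      have h2 := (h1.enorm).ennrpow_const p.toReal
      simpa [hpr] using h2
  rw [lintegral_zero] at hmain
  have := hmain.ennrpow_const (1 / p.toReal)
  rwa [ENNReal.zero_rpow_of_pos (by positivity)] at this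

theorem optimalValue_upper_semicontinuous {n m s : ℕ}
    (c : Fin n → ℝ) (q d : Fin m → ℝ)
    (A : Matrix (Fin s) (Fin m) ℝ) (T : Matrix (Fin s) (Fin n) ℝ)
    (hdom : (domf c q d A T).Nonempty) (hP : Pfeas A T = Set.univ)
    {Ω : Type*} [MeasureSpace Ω] [IsProbabilityMeasure (volume : Measure Ω)]
    (hatomless : AtomlessSpace (volume : Measure Ω))
    (p : ℝ≥0∞) [hp1 : Fact (1 ≤ p)] (hptop : p ≠ ⊤)
    (R : Lp ℝ p (volume : Measure Ω) → ℝ)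
    (hLI : ∀ Y₁ Y₂ : Lp ℝ p (volume : Measure Ω),
      Measure.map (Y₁ : Ω → ℝ) volume = Measure.map (Y₂ : Ω → ℝ) volume → R Y₁ = R Y₂)
    (hconv : ConvexOn ℝ Set.univ R)
    (hmono : ∀ Y₁ Y₂ : Lp ℝ p (volume : Measure Ω),
      (Y₁ : Ω → ℝ) ≤ᵐ[volume] (Y₂ : Ω → ℝ) → R Y₁ ≤ R Y₂)
    (X : Set (Fin n → ℝ)) (hXpoly : IsPolyhedron X) (hXne : X.Nonempty)
    (M : Set (ProbabilityMeasure (Fin s → ℝ)))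
    (hMmom : ∀ μ ∈ M,
      ∫⁻ z, ENNReal.ofReal (‖z‖ ^ p.toReal) ∂(μ : Measure (Fin s → ℝ)) < ⊤)
    (hLUI : LocUnifIntegrating p.toReal M)
    (Q : (Fin n → ℝ) → ProbabilityMeasure (Fin s → ℝ) → ℝ)
    (hQ : ∀ x μ, μ ∈ M → ∀ Y : Lp ℝ p (volume : Measure Ω),
      Measure.map (Y : Ω → ℝ) volume
        = Measure.map (fun z => (fE c q d A T x z).toReal) (μ : Measure (Fin s → ℝ)) →
      Q x μ = R Y)
    (φ : ProbabilityMeasure (Fin s → ℝ) → EReal)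
    (hφ : ∀ μ, φ μ = ⨅ x ∈ X, ((Q x μ : ℝ) : EReal)) :
    UpperSemicontinuousOn φ M := by
  rw [upperSemicontinuousOn_iff]
  intro μ hμ a ha
  rw [hφ] at ha
  obtain ⟨x, hx⟩ := iInf_lt_iff.1 ha
  obtain ⟨hxX, hxa⟩ := iInf_lt_iff.1 hx
  obtain ⟨a', ha1, ha2⟩ := EReal.lt_iff_exists_real_btwn.1 hxa
  have ha1' : Q x μ < a' := by exact_mod_cast ha1
  suffices hmain : ∀ᶠ ν in 𝓝[M] μ, Q x ν ≤ Q x μ + (a' - Q x μ) by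
    filter_upwards [hmain] with ν hν
    rw [hφ]
    refine (iInf₂_le x hxX).trans_lt (lt_of_le_of_lt ?_ ha2)
    have : Q x ν ≤ a' := by linarith
    exact_mod_cast this
  generalize hε : a' - Q x μ = ε
  have hε0 : 0 < ε := by linarith
  obtain ⟨g, hgc, ⟨K0, hK0, hgK⟩, hrepr⟩ := fE_repr c q d A T hdom hP
  let f : (Fin s → ℝ) → ℝ := fun z => c ⬝ᵥ x + g (T.mulVec x + z)
  have hfeq : (fun z => (fE c q d A T x z).toReal) = f := by
    ext z
    rw [hrepr, EReal.toReal_coe]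
  have hfc : Continuous f := continuous_const.add (hgc.comp (continuous_const.add continuous_id))
  obtain ⟨K, hK1, hfK⟩ : ∃ K : ℝ, 1 ≤ K ∧ ∀ z, |f z| ≤ K * (1 + ‖z‖) := by
    refine ⟨1 + |c ⬝ᵥ x| + K0 * ‖T.mulVec x‖ + K0, ?_, fun z => ?_⟩
    · have := abs_nonneg (c ⬝ᵥ x)
      have : 0 ≤ K0 * ‖T.mulVec x‖ := by positivity
      linarith
    · have h1 : |f z| ≤ |c ⬝ᵥ x| + K0 * (‖T.mulVec x‖ + ‖z‖) := by
        refine (abs_add_le _ _).trans ?_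
        gcongr
        refine (hgK _).trans ?_
        gcongr
        exact norm_add_le _ _
      have h2 := abs_nonneg (c ⬝ᵥ x)
      have h3 : 0 ≤ K0 * ‖T.mulVec x‖ := by positivity
      have h4 := norm_nonneg z
      nlinarith [mul_nonneg h2 h4, mul_nonneg h3 h4]
  obtain ⟨V, hVm, hV0⟩ := exists_diffuse (volume : Measure Ω) hatomless
  obtain ⟨U, hU, hU1, hUmap⟩ := exists_uniform (volume : Measure Ω) V hVm hV0
  let Y : ProbabilityMeasure (Fin s → ℝ) → Ω → ℝ := fun ν ω =>
    quantl (Measure.map f (ν : Measure (Fin s → ℝ))) (U ω)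
  have hpr : ∀ ν : ProbabilityMeasure (Fin s → ℝ),
      IsProbabilityMeasure (Measure.map f (ν : Measure (Fin s → ℝ))) := fun ν =>
    Measure.isProbabilityMeasure_map hfc.measurable.aemeasurable
  have hYm : ∀ ν, Measurable (Y ν) := fun ν =>
    (quantl_law volume U hU hU1 hUmap (Measure.map f (ν : Measure (Fin s → ℝ)))).1
  have hYlaw : ∀ ν, Measure.map (Y ν) volume = Measure.map f (ν : Measure (Fin s → ℝ)) := fun ν =>
    (quantl_law volume U hU hU1 hUmap (Measure.map f (ν : Measure (Fin s → ℝ)))).2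
  have hYnorm : ∀ (h : ℝ → ℝ) (_ : Measurable h) (ν : ProbabilityMeasure (Fin s → ℝ)),
      eLpNorm (fun ω => h (Y ν ω)) p volume
        = eLpNorm (fun z => h (f z)) p (ν : Measure (Fin s → ℝ)) := by
    intro h hh ν
    have h1 := eLpNorm_map_measure (p := p) (μ := (volume : Measure Ω)) (f := Y ν) (g := h)
      hh.aestronglyMeasurable (hYm ν).aemeasurable
    have h2 := eLpNorm_map_measure (p := p) (μ := (ν : Measure (Fin s → ℝ))) (f := f) (g := h)
      hh.aestronglyMeasurable hfc.measurable.aemeasurable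
    rw [hYlaw, h2] at h1
    exact h1.symm
  have hYmem : ∀ ν ∈ M, MemLp (Y ν) p volume := by
    intro ν hν
    refine ⟨(hYm ν).aestronglyMeasurable, ?_⟩
    have := hYnorm id measurable_id ν
    simp only [id] at this
    change eLpNorm (fun ω => Y ν ω) p volume < ⊤
    rw [this]
    exact (memLp_growth p hp1.out hptop f hfc K hfK ν (hMmom ν hν)).2
  have hQY : ∀ ν (hν : ν ∈ M), Q x ν = R ((hYmem ν hν).toLp) := by
    intro ν hν
    apply hQ x ν hν
    rw [hfeq, ← hYlaw]
    exact Measure.map_congr (hYmem ν hν).coeFn_toLp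
  obtain ⟨δ, hδ, hRδ⟩ := risk_upper p R hconv hmono ((hYmem μ hμ).toLp) ε hε0
  obtain ⟨C, hC0, hC⟩ := tail_small p hp1.out hptop M hLUI f K hK1 hfK μ hμ (δ / 4) (by positivity)
  have hlim := quantl_usc volume U hU hU1 hUmap f hfc μ
  have htr := trunc_tendsto volume p hp1.out hptop (𝓝 μ) Y hYm (Y μ) (hYm μ) (hYmem μ hμ) C hC0 hlim
  have htr2 := htr.eventually_lt_const (u := ENNReal.ofReal (δ / 4)) (by positivity)
  filter_upwards [self_mem_nhdsWithin, hC, mem_nhdsWithin_of_mem_nhds htr2] with ν hνM hν1 hν2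
  have hDm : MemLp (fun ω => max (Y ν ω - Y μ ω) 0) p volume :=
    ((hYmem ν hνM).sub (hYmem μ hμ)).pos_part
  have hhm : Measurable (fun y : ℝ => if C ≤ |y| then y else 0) :=
    Measurable.ite (measurableSet_le measurable_const measurable_id.abs) measurable_id measurable_const
  have hDnorm : eLpNorm (fun ω => max (Y ν ω - Y μ ω) 0) p volume ≤ ENNReal.ofReal (δ / 2) := by
    have h1 : eLpNorm (fun ω => max (Y ν ω - Y μ ω) 0) p volume ≤
        eLpNorm ((fun ω => max (min (Y ν ω) C - Y μ ω) 0)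
          + (fun ω => |if C ≤ |Y ν ω| then Y ν ω else 0|)) p volume := by
      apply eLpNorm_mono
      intro ω
      rw [Pi.add_apply, Real.norm_eq_abs, Real.norm_eq_abs, abs_of_nonneg (le_max_right _ _),
        abs_of_nonneg (by positivity)]
      rcases le_total C (Y ν ω) with h | h
      · have hn : 0 ≤ Y ν ω := hC0.trans h
        rw [min_eq_right h, abs_of_nonneg hn, if_pos h, abs_of_nonneg hn]
        apply max_le
        · linarith [le_max_left (C - Y μ ω) 0]
        · positivity
      · rw [min_eq_left h]
        have := abs_nonneg (if C ≤ |Y ν ω| then Y ν ω else 0)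
        linarith
    refine h1.trans ?_
    refine (eLpNorm_add_le ?_ ?_ hp1.out).trans ?_
    · exact ((((hYm ν).min measurable_const).sub (hYm μ)).max measurable_const).aestronglyMeasurable
    · exact (hhm.comp (hYm ν)).abs.aestronglyMeasurable
    · have h2 : eLpNorm (fun ω => |if C ≤ |Y ν ω| then Y ν ω else 0|) p volume
          ≤ ENNReal.ofReal (δ / 4) := by
        have := eLpNorm_norm (p := p) (μ := (volume : Measure Ω))
          (fun ω => if C ≤ |Y ν ω| then Y ν ω else 0)
        simp only [Real.norm_eq_abs] at this
        rw [this, hYnorm _ hhm ν]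
        exact hν1
      have h3 : ENNReal.ofReal (δ / 2) = ENNReal.ofReal (δ / 4) + ENNReal.ofReal (δ / 4) := by
        rw [← ENNReal.ofReal_add (by positivity) (by positivity)]
        congr 1; ring
      rw [h3]
      exact add_le_add hν2.le h2
  have hD0 : 0 ≤ hDm.toLp := by
    rw [← Lp.coeFn_le]
    filter_upwards [hDm.coeFn_toLp, Lp.coeFn_zero ℝ p (volume : Measure Ω)] with ω h1 h2
    rw [h1, h2]
    exact le_max_right _ _
  have hDlt : ‖hDm.toLp‖ < δ := by
    rw [Lp.norm_toLp]
    refine (ENNReal.toReal_mono ENNReal.ofReal_ne_top hDnorm).trans_lt ?_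
    rw [ENNReal.toReal_ofReal (by positivity)]
    linarith
  have hfin := hRδ hDm.toLp hD0 hDlt
  rw [hQY ν hνM, hQY μ hμ]
  refine le_trans (hmono _ _ ?_) hfin
  filter_upwards [hDm.coeFn_toLp, (hYmem ν hνM).coeFn_toLp, (hYmem μ hμ).coeFn_toLp,
    Lp.coeFn_add ((hYmem μ hμ).toLp) hDm.toLp] with ω h1 h2 h3 h4
  rw [h4, Pi.add_apply, h1, h2, h3]
  linarith [le_max_left (Y ν ω - Y μ ω) 0]
end
end
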